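/- arXiv:1809.06921 — 4 statements merged into one kernel-verified Lean document; each statement's English description precedes it below -/
import Mathlib

section
/- The derivative of the Hurwitz zeta function at s = 0 satisfies ζ'(0,x) = log Γ(x) - (1/2) log(2π) for 0 < x ≤ 1 (Lerch's formula). -/
open HurwitzZeta

/-- The regularised terms. -/
noncomputable def lerchTerm (x : ℝ) (n : ℕ) (s : ℂ) : ℂ :=
  (((n + x : ℝ) : ℂ) ^ (-s) - ((n + 1 : ℝ) : ℂ) ^ (-s))
    - ((1 - x : ℝ) : ℂ) * (((n + 1 : ℝ) : ℂ) ^ (-s) - ((n + 2 : ℝ) : ℂ) ^ (-s))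

lemma lerch_hasDerivAt (w : ℂ) {y : ℝ} (hy : 0 < y) :
    HasDerivAt (fun y : ℝ => (y : ℂ) ^ w) (w * (y : ℂ) ^ (w - 1)) y := by
  have h := (hasDerivAt_id (y : ℂ)).cpow_const (c := w) (Or.inl (by simpa using hy))
  simpa using h.comp_ofReal

lemma lerch_lip (s : ℂ) (hs : -2 ≤ s.re) {a u v : ℝ} (ha : 0 < a) (hu : a ≤ u) (hv : a ≤ v) :
    ‖(-s) * (v : ℂ) ^ (-s - 1) - (-s) * (u : ℂ) ^ (-s - 1)‖
      ≤ ‖s‖ * ‖s + 1‖ * a ^ (-s.re - 2) * |v - u| := by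
  have key := Convex.norm_image_sub_le_of_norm_hasDerivWithin_le (𝕜 := ℝ)
    (f := fun y : ℝ => (-s) * (y : ℂ) ^ (-s - 1))
    (f' := fun y : ℝ => (-s) * ((-s - 1) * (y : ℂ) ^ (-s - 1 - 1))) (s := Set.Ici a)
    (C := ‖s‖ * ‖s + 1‖ * a ^ (-s.re - 2)) (x := u) (y := v)
    (fun y hy => ((lerch_hasDerivAt (-s - 1)
      (lt_of_lt_of_le ha hy)).const_mul (-s)).hasDerivWithinAt) ?_ (convex_Ici a) hu hv
  · simpa using key
  · intro y hy
    have hy' : a ≤ y := hy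
    rw [norm_mul, norm_mul, norm_neg, Complex.norm_cpow_eq_rpow_re_of_pos (lt_of_lt_of_le ha hy'),
      ← mul_assoc, show -s - 1 = -(s + 1) by ring, norm_neg]
    have : (-(s + 1) - 1).re = -s.re - 2 := by simp; ring
    rw [this]
    gcongr ?_ * ?_
    exact Real.rpow_le_rpow_of_nonpos ha hy' (by linarith)

lemma lerch_bound (s : ℂ) (hs : -2 ≤ s.re) {b c : ℝ} (hc : 0 ≤ c) (hc1 : c ≤ 1) (hb : 0 < b - c) :
    ‖(((b - c : ℝ) : ℂ) ^ (-s) - (b : ℂ) ^ (-s))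
      - (c : ℂ) * ((b : ℂ) ^ (-s) - ((b + 1 : ℝ) : ℂ) ^ (-s))‖
      ≤ 2 * (‖s‖ * ‖s + 1‖ * (b - c) ^ (-s.re - 2)) := by
  set M := ‖s‖ * ‖s + 1‖ * (b - c) ^ (-s.re - 2) with hM
  have hM0 : 0 ≤ M := by positivity
  have key := Convex.norm_image_sub_le_of_norm_hasDerivWithin_le (𝕜 := ℝ)
    (f := fun y : ℝ => (((b - c * y : ℝ) : ℂ) ^ (-s) - (b : ℂ) ^ (-s))
      - (c : ℂ) * ((b : ℂ) ^ (-s) - ((b + y : ℝ) : ℂ) ^ (-s)))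
    (f' := fun y : ℝ => (c : ℂ) * ((-s) * ((b + y : ℝ) : ℂ) ^ (-s - 1)
      - (-s) * ((b - c * y : ℝ) : ℂ) ^ (-s - 1))) (s := Set.Icc 0 1)
    (C := 2 * M) (x := 0) (y := 1) ?_ ?_ (convex_Icc 0 1) (by simp) (by simp)
  · simpa using key
  · rintro y ⟨hy0, hy1⟩
    have h1 : 0 < b - c * y := by nlinarith
    have h2 : 0 < b + y := by nlinarith
    have d1 : HasDerivAt (fun y : ℝ => b - c * y) (-c) y := by
      simpa using ((hasDerivAt_id y).const_mul c).const_sub b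
    have d2 : HasDerivAt (fun y : ℝ => b + y) 1 y := by
      simpa using (hasDerivAt_id y).const_add b
    have e1 := (lerch_hasDerivAt (-s) h1).scomp y d1
    have e2 := (lerch_hasDerivAt (-s) h2).scomp y d2
    have e := (e1.sub_const ((b : ℂ) ^ (-s))).sub ((e2.const_sub ((b : ℂ) ^ (-s))).const_mul (c : ℂ))
    refine (HasDerivAt.congr_deriv e ?_).hasDerivWithinAt
    simp only [Complex.real_smul]
    push_cast
    ring
  · rintro y ⟨hy0, hy1⟩
    have h1 : b - c ≤ b - c * y := by nlinarith
    have h2 : b - c ≤ b + y := by nlinarith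
    have h := lerch_lip s hs hb h1 h2
    rw [norm_mul]
    have hcn : ‖(c : ℂ)‖ ≤ 1 := by simpa [abs_of_nonneg hc] using hc1
    have habs : |b + y - (b - c * y)| ≤ 2 := by
      rw [abs_le]; constructor <;> nlinarith
    calc _ ≤ 1 * (M * 2) := by
          gcongr
          exact h.trans (by gcongr)
      _ = 2 * M := by ring

lemma lerchTerm_bound {x : ℝ} (hx0 : 0 < x) (hx1 : x ≤ 1) (n : ℕ) {s : ℂ}
    (hs : -(1 / 2) < s.re) (hs3 : ‖s‖ < 3) :
    ‖lerchTerm x n s‖ ≤ 24 * x ^ (-(7 / 2) : ℝ) * (1 / |n + x| ^ (3 / 2 : ℝ)) := by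
  have hn : (0 : ℝ) ≤ n := n.cast_nonneg
  have ha : 0 < n + x := by positivity
  have h := lerch_bound s (by linarith) (b := n + 1) (c := 1 - x) (by linarith) (by linarith)
    (by linarith)
  have e1 : (n : ℝ) + 1 - (1 - x) = n + x := by ring
  have e2 : (n : ℝ) + 1 + 1 = n + 2 := by ring
  rw [e1, e2] at h
  refine (h : ‖lerchTerm x n s‖ ≤ _).trans ?_
  have hre : s.re < 3 := (Complex.re_le_norm s).trans_lt hs3
  have hs4 : ‖s + 1‖ ≤ 4 := by
    calc _ ≤ ‖s‖ + ‖(1 : ℂ)‖ := norm_add_le _ _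
      _ ≤ 4 := by simp; linarith
  rw [abs_of_pos ha, one_div, ← Real.rpow_neg ha.le]
  have hp : ((n : ℝ) + x) ^ (-s.re - 2) ≤ x ^ (-(7 / 2) : ℝ) * (n + x) ^ (-(3 / 2) : ℝ) := by
    rw [show -s.re - 2 = (-s.re - 1 / 2) + (-(3 / 2)) by ring, Real.rpow_add ha]
    gcongr
    calc ((n : ℝ) + x) ^ (-s.re - 1 / 2) ≤ x ^ (-s.re - 1 / 2) :=
          Real.rpow_le_rpow_of_nonpos hx0 (by linarith) (by linarith)
      _ ≤ _ := Real.rpow_le_rpow_of_exponent_ge hx0 hx1 (by linarith)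
  calc _ ≤ 2 * (3 * 4 * (x ^ (-(7 / 2) : ℝ) * (n + x) ^ (-(3 / 2) : ℝ))) := by gcongr
    _ = _ := by ring

lemma lerchTerm_hasDerivAt {x : ℝ} (hx0 : 0 < x) (n : ℕ) (s : ℂ) :
    HasDerivAt (lerchTerm x n)
      ((((n + x : ℝ) : ℂ) ^ (-s) * Complex.log ((n + x : ℝ) : ℂ) * (-1)
        - ((n + 1 : ℝ) : ℂ) ^ (-s) * Complex.log ((n + 1 : ℝ) : ℂ) * (-1))
      - ((1 - x : ℝ) : ℂ) * (((n + 1 : ℝ) : ℂ) ^ (-s) * Complex.log ((n + 1 : ℝ) : ℂ) * (-1)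
        - ((n + 2 : ℝ) : ℂ) ^ (-s) * Complex.log ((n + 2 : ℝ) : ℂ) * (-1))) s := by
  have hn : (0 : ℝ) ≤ n := n.cast_nonneg
  have aux : ∀ y : ℝ, 0 < y → HasDerivAt (fun s : ℂ => (y : ℂ) ^ (-s))
      ((y : ℂ) ^ (-s) * Complex.log y * (-1)) s := fun y hy =>
    (hasDerivAt_neg s).const_cpow (Or.inl (by exact_mod_cast hy.ne'))
  exact ((aux _ (by positivity)).sub (aux _ (by positivity))).sub
    (((aux _ (by positivity)).sub (aux _ (by positivity))).const_mul _)

lemma lerchTerm_deriv_zero {x : ℝ} (hx0 : 0 < x) (n : ℕ) :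
    deriv (lerchTerm x n) 0 = ((-(Real.log (x + n)) + Real.log (n + 1)
      + (1 - x) * (Real.log (n + 1) - Real.log (n + 2)) : ℝ) : ℂ) := by
  have hn : (0 : ℝ) ≤ n := n.cast_nonneg
  rw [(lerchTerm_hasDerivAt hx0 n 0).deriv]
  rw [← Complex.ofReal_log (by positivity), ← Complex.ofReal_log (by positivity),
    ← Complex.ofReal_log (by positivity), add_comm (n : ℝ) x]
  simp only [neg_zero, Complex.cpow_zero]
  push_cast
  ring

lemma lerchTerm_partial (x : ℝ) (N : ℕ) :
    ∑ n ∈ Finset.range N, (-(Real.log (x + n)) + Real.log (n + 1)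
      + (1 - x) * (Real.log (n + 1) - Real.log (n + 2)))
    = -(∑ n ∈ Finset.range N, Real.log (x + n)) + Real.log (N.factorial)
      - (1 - x) * Real.log (N + 1) := by
  induction N with
  | zero => simp
  | succ k ih =>
    rw [Finset.sum_range_succ, ih, Finset.sum_range_succ, Nat.factorial_succ]
    push_cast
    rw [Real.log_mul (by positivity) (by positivity), show (k : ℝ) + 1 + 1 = k + 2 by ring]
    ring

open Filter Topology in
lemma lerch_log_ratio (k : ℝ) :
    Tendsto (fun n : ℕ => Real.log (n + k) - Real.log n) atTop (𝓝 0) :=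
  (Real.tendsto_log_comp_add_sub_log k).comp tendsto_natCast_atTop_atTop

open Filter Topology in
lemma lerchTerm_limit {x : ℝ} (hx0 : 0 < x) :
    Tendsto (fun N : ℕ => ∑ n ∈ Finset.range N, (-(Real.log (x + n)) + Real.log (n + 1)
      + (1 - x) * (Real.log (n + 1) - Real.log (n + 2)))) atTop
      (𝓝 (Real.log (Real.Gamma x))) := by
  rw [← tendsto_add_atTop_iff_nat 1]
  have h := (Real.BohrMollerup.tendsto_log_gamma hx0).add
    ((lerch_log_ratio 1).sub ((lerch_log_ratio 2).const_mul (1 - x)))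
  simp only [mul_zero, sub_zero, add_zero] at h
  refine h.congr fun N => ?_
  rw [lerchTerm_partial, Real.BohrMollerup.logGammaSeq, Nat.factorial_succ]
  push_cast
  rw [Real.log_mul (by positivity) (by positivity), show (N : ℝ) + 1 + 1 = N + 2 by ring]
  ring

lemma lerch_hasSum {x : ℝ} (hx0 : 0 < x) (hx1 : x ≤ 1) {s : ℂ} (hs : 1 < s.re) :
    HasSum (fun n => lerchTerm x n s)
      (hurwitzZeta (x : UnitAddCircle) s - riemannZeta s - ((1 - x : ℝ) : ℂ)) := by
  have h1 := hasSum_hurwitzZeta_of_one_lt_re (a := x) ⟨hx0.le, hx1⟩ hs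
  have h2 := hasSum_hurwitzZeta_of_one_lt_re (a := 1) ⟨zero_le_one, le_rfl⟩ hs
  have e : ((1 : ℝ) : UnitAddCircle) = 0 := AddCircle.coe_period 1
  rw [e, hurwitzZeta_zero] at h2
  have h3 := (hasSum_nat_add_iff' 1).mpr h2
  have h := (h1.sub h2).sub ((h2.sub h3).mul_left ((1 - x : ℝ) : ℂ))
  have hf : (fun n => lerchTerm x n s) = fun b : ℕ => 1 / ((b : ℂ) + (x : ℂ)) ^ s
      - 1 / ((b : ℂ) + ((1 : ℝ) : ℂ)) ^ s - ((1 - x : ℝ) : ℂ) * (1 / ((b : ℂ) + ((1 : ℝ) : ℂ)) ^ s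
      - 1 / (((b + 1 : ℕ) : ℂ) + ((1 : ℝ) : ℂ)) ^ s) := by
    ext n
    simp only [lerchTerm, Complex.cpow_neg, one_div]
    push_cast
    rw [add_assoc (n : ℂ) 1 1, one_add_one_eq_two]
  rw [hf]
  have hv : ((1 - x : ℝ) : ℂ) * (riemannZeta s - (riemannZeta s
      - ∑ i ∈ Finset.range 1, 1 / ((i : ℂ) + ((1 : ℝ) : ℂ)) ^ s)) = ((1 - x : ℝ) : ℂ) := by simp
  rw [hv] at h
  exact h

/-- Lerch's formula: `ζ'(0,x) = log Γ(x) - (1/2) log (2π)` for `0 < x ≤ 1`,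
the derivative being with respect to `s`. -/
theorem hurwitzZeta_deriv_at_zero (x : ℝ) (hx0 : 0 < x) (hx1 : x ≤ 1) :
    deriv (fun s : ℂ => hurwitzZeta (↑x : UnitAddCircle) s) 0 =
      Real.log (Real.Gamma x) - (1 / 2) * Real.log (2 * Real.pi) := by
  set U : Set ℂ := {s | -(1 / 2) < s.re} ∩ Metric.ball 0 3 with hU
  have hUo : IsOpen U := (isOpen_lt continuous_const Complex.continuous_re).inter Metric.isOpen_ball
  have hUc : Convex ℝ U := (convex_halfSpace_re_gt _).inter (convex_ball 0 3)
  have h0 : (0 : ℂ) ∈ U := by simp [hU]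
  have h2 : (2 : ℂ) ∈ U := by
    constructor
    · simp; norm_num
    · simp; norm_num
  have hsum : Summable (fun n : ℕ => 24 * x ^ (-(7 / 2) : ℝ) * (1 / |n + x| ^ (3 / 2 : ℝ))) :=
    ((Real.summable_one_div_nat_add_rpow x (3 / 2)).mpr (by norm_num)).mul_left _
  have hd : ∀ n : ℕ, DifferentiableOn ℂ (lerchTerm x n) U := fun n s _ =>
    (lerchTerm_hasDerivAt hx0 n s).differentiableAt.differentiableWithinAt
  have hb : ∀ (n : ℕ) (s : ℂ), s ∈ U →
      ‖lerchTerm x n s‖ ≤ 24 * x ^ (-(7 / 2) : ℝ) * (1 / |n + x| ^ (3 / 2 : ℝ)) := by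
    intro n s hs
    exact lerchTerm_bound hx0 hx1 n hs.1 (by simpa using hs.2)
  have hT := Complex.differentiableOn_tsum_of_summable_norm hsum hd hUo hb
  have hT' := Complex.hasSum_deriv_of_summable_norm hsum hd hUo hb h0
  have hD : Differentiable ℂ (fun s => hurwitzZeta (x : UnitAddCircle) s - hurwitzZeta 0 s) :=
    differentiable_hurwitzZeta_sub_hurwitzZeta _ _
  have heq : Set.EqOn (fun s => hurwitzZeta (x : UnitAddCircle) s - hurwitzZeta 0 s)
      (fun s => (∑' n, lerchTerm x n s) + ((1 - x : ℝ) : ℂ)) U := by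
    refine AnalyticOnNhd.eqOn_of_preconnected_of_eventuallyEq
      (hD.differentiableOn.analyticOnNhd hUo) ((hT.add_const _).analyticOnNhd hUo)
      hUc.isPreconnected h2 ?_
    have : {s : ℂ | 1 < s.re} ∈ nhds (2 : ℂ) :=
      (isOpen_lt continuous_const Complex.continuous_re).mem_nhds (by simp)
    filter_upwards [this] with s hs
    rw [(lerch_hasSum hx0 hx1 hs).tsum_eq, hurwitzZeta_zero]
    ring
  have hder := (heq.eventuallyEq_of_mem (hUo.mem_nhds h0)).deriv_eq
  rw [deriv_add_const, deriv_fun_sub (differentiableAt_hurwitzZeta _ (by simp))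
    (differentiableAt_hurwitzZeta _ (by simp)), ← hT'.tsum_eq, hurwitzZeta_zero] at hder
  have hlim : ∑' n, deriv (lerchTerm x n) 0 = (Real.log (Real.Gamma x) : ℂ) := by
    refine tendsto_nhds_unique hT'.summable.hasSum.tendsto_sum_nat ?_
    have := (Complex.continuous_ofReal.tendsto _).comp (lerchTerm_limit hx0)
    refine this.congr fun N => ?_
    simp only [Function.comp, Complex.ofReal_sum, lerchTerm_deriv_zero hx0]
  have hz : deriv riemannZeta 0 = -(1 / 2) * (Real.log (2 * Real.pi) : ℂ) := by
    rw [deriv_riemannZeta_zero, Complex.ofReal_log (by positivity)]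
    push_cast
    ring
  change deriv (fun s : ℂ => hurwitzZeta (↑x : UnitAddCircle) s) 0 - deriv riemannZeta 0 = _ at hder
  rw [hlim, hz] at hder
  linear_combination hder
end

section
/- Let f be a q-periodic arithmetical function with ∑_{a=1}^q f(a) = 0. Then the derivative at s = 0 of L(s,f) = q^{-s} ∑_{a=1}^q f(a) ζ(s,a/q) satisfies L'(0,f) = (log q / q) · ∑_{a=1}^q a f(a) + ∑_{a=1}^q f(a) log Γ(a/q). -/
open Finset Filter Topology HurwitzZeta

lemma second_diff_bound (φ ψ₁ ψ₂ : ℝ → ℂ) (a d C : ℝ) (hd0 : 0 ≤ d) (hd1 : d ≤ 1)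
    (h1 : ∀ t ∈ Set.Icc (a - d) (a + 1), HasDerivAt φ (ψ₁ t) t)
    (h2 : ∀ t ∈ Set.Icc (a - d) (a + 1), HasDerivAt ψ₁ (ψ₂ t) t)
    (hC : ∀ t ∈ Set.Icc (a - d) (a + 1), ‖ψ₂ t‖ ≤ C) :
    ‖φ (a - d) - φ a - d * (φ a - φ (a + 1))‖ ≤ 2 * C := by
  have hconv : Convex ℝ (Set.Icc (a - d) (a + 1)) := convex_Icc _ _
  have ha : a ∈ Set.Icc (a - d) (a + 1) := ⟨by linarith, by linarith⟩
  have hl : a - d ∈ Set.Icc (a - d) (a + 1) := ⟨by linarith, by linarith⟩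
  have hr : a + 1 ∈ Set.Icc (a - d) (a + 1) := ⟨by linarith, by linarith⟩
  have hC0 : 0 ≤ C := (norm_nonneg _).trans (hC a ha)
  have key : ∀ t ∈ Set.Icc (a - d) (a + 1), ‖ψ₁ t - ψ₁ a‖ ≤ C := by
    intro t ht
    have := hconv.norm_image_sub_le_of_norm_hasDerivWithin_le
      (fun u hu => (h2 u hu).hasDerivWithinAt) hC ha ht
    refine this.trans ?_
    have : ‖t - a‖ ≤ 1 := by
      rw [Real.norm_eq_abs, abs_le]; constructor <;> linarith [ht.1, ht.2]
    nlinarith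
  have hg : ∀ t ∈ Set.Icc (a - d) (a + 1),
      HasDerivWithinAt (fun t : ℝ => φ t - (t : ℂ) * ψ₁ a) (ψ₁ t - ψ₁ a)
        (Set.Icc (a - d) (a + 1)) t := by
    intro t ht
    have := (h1 t ht).fun_sub ((Complex.ofRealCLM.hasDerivAt (x := t)).mul_const (ψ₁ a))
    simpa using this.hasDerivWithinAt
  have e1 := hconv.norm_image_sub_le_of_norm_hasDerivWithin_le hg key ha hl
  have e2 := hconv.norm_image_sub_le_of_norm_hasDerivWithin_le hg key hr ha
  have n1 : ‖a - d - a‖ ≤ 1 := by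
    rw [Real.norm_eq_abs, abs_le]; constructor <;> linarith
  have n2 : ‖a - (a + 1)‖ ≤ 1 := by
    rw [Real.norm_eq_abs, abs_le]; constructor <;> linarith
  have e3 := e1.trans (mul_le_of_le_one_right hC0 n1)
  have e4 := e2.trans (mul_le_of_le_one_right hC0 n2)
  have : φ (a - d) - φ a - d * (φ a - φ (a + 1)) =
      ((φ (a - d) - ((a - d : ℝ) : ℂ) * ψ₁ a) - (φ a - (a : ℂ) * ψ₁ a)) -
      d * ((φ a - (a : ℂ) * ψ₁ a) - (φ (a + 1) - ((a + 1 : ℝ) : ℂ) * ψ₁ a)) := by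
    push_cast; ring
  rw [this]
  refine (norm_sub_le _ _).trans ?_
  rw [norm_mul, Complex.norm_real, Real.norm_eq_abs, abs_of_nonneg hd0]
  have := mul_le_mul hd1 e4 (norm_nonneg _) zero_le_one
  linarith

lemma hasDerivAt_ofReal_cpow_aux (c : ℂ) (t : ℝ) (ht : 0 < t) :
    HasDerivAt (fun t : ℝ => (t : ℂ) ^ c) (c * (t : ℂ) ^ (c - 1)) t := by
  have h := (hasDerivAt_id (t : ℂ)).cpow_const (c := c)
    (by simpa using Complex.ofReal_mem_slitPlane.2 ht)
  simpa using h.comp_ofReal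

/-- Terms of the accelerated series. -/
noncomputable def accTerm (x : ℝ) (n : ℕ) (s : ℂ) : ℂ :=
  ((n + x : ℝ) : ℂ) ^ (-s) - ((n + 1 : ℝ) : ℂ) ^ (-s)
    - ((1 - x : ℝ) : ℂ) * (((n + 1 : ℝ) : ℂ) ^ (-s) - ((n + 2 : ℝ) : ℂ) ^ (-s))

lemma norm_accTerm_le {x : ℝ} (hx0 : 0 < x) (hx1 : x ≤ 1) (n : ℕ) (s : ℂ)
    (hs : s ∈ Metric.ball (1 : ℂ) (5 / 4)) :
    ‖accTerm x n s‖ ≤ 2 * (9 * (x ^ (-5 : ℝ) * ((n : ℝ) + 1) ^ (-(7 / 4) : ℝ))) := by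
  rw [Metric.mem_ball, dist_eq_norm] at hs
  have hre := (Complex.abs_re_le_norm (s - 1)).trans hs.le
  rw [abs_le] at hre
  simp only [Complex.sub_re, Complex.one_re] at hre
  have hsn : ‖s‖ ≤ 9 / 4 := by
    have := norm_add_le (s - 1) 1
    simp only [sub_add_cancel, norm_one] at this; linarith
  have hsn1 : ‖s + 1‖ ≤ 4 := by
    have := norm_add_le s 1
    simp only [norm_one] at this; linarith
  have hn : (0 : ℝ) ≤ n := n.cast_nonneg
  have := second_diff_bound (fun t : ℝ => (t : ℂ) ^ (-s)) (fun t : ℝ => -s * (t : ℂ) ^ (-s - 1))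
    (fun t : ℝ => -s * ((-s - 1) * (t : ℂ) ^ (-s - 1 - 1))) (n + 1) (1 - x)
    (9 * (x ^ (-5 : ℝ) * ((n : ℝ) + 1) ^ (-(7 / 4) : ℝ))) (by linarith) (by linarith)
    (fun t ht => hasDerivAt_ofReal_cpow_aux _ _ (by linarith [ht.1]))
    (fun t ht => (hasDerivAt_ofReal_cpow_aux _ _ (by linarith [ht.1])).const_mul _)
    (fun t ht => by
      have ht0 : 0 < t := by linarith [ht.1]
      have htx : (n : ℝ) + x ≤ t := by linarith [ht.1]
      rw [norm_mul, norm_mul, Complex.norm_cpow_eq_rpow_re_of_pos ht0, norm_neg,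
        show -s - 1 = -(s + 1) by ring, norm_neg, ← mul_assoc]
      have h9 : ‖s‖ * ‖s + 1‖ ≤ 9 := by
        calc _ ≤ (9 / 4 : ℝ) * 4 := by gcongr
          _ = 9 := by norm_num
      refine mul_le_mul h9 ?_ (by positivity) (by norm_num)
      simp only [Complex.sub_re, Complex.neg_re, Complex.add_re, Complex.one_re]
      have hq : (n : ℝ) + 1 ≤ t / x := by
        rw [le_div_iff₀ hx0]; nlinarith
      have : t = x * (t / x) := by field_simp
      rw [this, Real.mul_rpow hx0.le (by positivity)]
      refine mul_le_mul ?_ ?_ (by positivity) (by positivity)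
      · exact Real.rpow_le_rpow_of_exponent_ge hx0 hx1 (by linarith)
      · calc (t / x) ^ (-(s.re + 1) - 1) ≤ (t / x) ^ (-(7 / 4) : ℝ) :=
              Real.rpow_le_rpow_of_exponent_le (by linarith) (by linarith)
          _ ≤ _ := Real.rpow_le_rpow_of_nonpos (by positivity) hq (by norm_num))
  convert this using 2
  unfold accTerm
  rw [show (n : ℝ) + 1 - (1 - x) = n + x by ring, show (n : ℝ) + 1 + 1 = n + 2 by ring]

lemma summable_bound (x : ℝ) :
    Summable fun n : ℕ => 2 * (9 * (x ^ (-5 : ℝ) * ((n : ℝ) + 1) ^ (-(7 / 4) : ℝ))) := by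
  refine (Summable.mul_left _ ?_).mul_left _ |>.mul_left _
  have := (summable_nat_add_iff 1).2 (Real.summable_nat_rpow.2 (show (-(7/4) : ℝ) < -1 by norm_num))
  simpa using this

lemma hasDerivAt_cpow_neg (y : ℝ) (hy : 0 < y) (s : ℂ) :
    HasDerivAt (fun s : ℂ => (y : ℂ) ^ (-s)) (-((y : ℂ) ^ (-s) * Real.log y)) s := by
  have := (hasDerivAt_neg s).const_cpow (c := (y : ℂ)) (Or.inl (by exact_mod_cast hy.ne'))
  rw [Complex.ofReal_log hy.le]
  convert this using 1; ring

lemma hasDerivAt_accTerm {x : ℝ} (hx0 : 0 < x) (n : ℕ) (s : ℂ) :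
    HasDerivAt (accTerm x n)
      (-(((n + x : ℝ) : ℂ) ^ (-s) * Real.log (n + x)) - -(((n + 1 : ℝ) : ℂ) ^ (-s) * Real.log (n + 1))
    - ((1 - x : ℝ) : ℂ) * (-(((n + 1 : ℝ) : ℂ) ^ (-s) * Real.log (n + 1)) -
      -(((n + 2 : ℝ) : ℂ) ^ (-s) * Real.log (n + 2)))) s :=
  ((hasDerivAt_cpow_neg _ (by positivity) s).sub (hasDerivAt_cpow_neg _ (by positivity) s)).sub
    (((hasDerivAt_cpow_neg _ (by positivity) s).sub
      (hasDerivAt_cpow_neg _ (by positivity) s)).const_mul _)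

lemma hasSum_accTerm {x : ℝ} (hx0 : 0 < x) (hx1 : x ≤ 1) {s : ℂ} (hs : 1 < s.re) :
    HasSum (fun n => accTerm x n s)
      (hurwitzZeta (x : UnitAddCircle) s - hurwitzZeta ((1 : ℝ) : UnitAddCircle) s
        - ((1 - x : ℝ) : ℂ)) := by
  have hx := hasSum_hurwitzZeta_of_one_lt_re (a := x) ⟨hx0.le, hx1⟩ hs
  have h1 := hasSum_hurwitzZeta_of_one_lt_re (a := 1) ⟨zero_le_one, le_rfl⟩ hs
  have h2 : HasSum (fun n : ℕ => 1 / (((n + 1 : ℕ) : ℂ) + ((1 : ℝ) : ℂ)) ^ s)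
      (hurwitzZeta ((1 : ℝ) : UnitAddCircle) s - 1) := by
    rw [hasSum_nat_add_iff (f := fun n : ℕ => 1 / ((n : ℂ) + ((1 : ℝ) : ℂ)) ^ s) 1]
    simpa using h1
  have h := (hx.sub h1).sub ((h1.sub h2).mul_left ((1 - x : ℝ) : ℂ))
  convert! h using 1
  · ext n
    simp only [accTerm, Complex.cpow_neg, one_div]
    push_cast
    rw [show (n : ℂ) + 1 + 1 = n + 2 by ring]
  · ring

lemma tendsto_partial {x : ℝ} (hx0 : 0 < x) :
    Tendsto (fun N : ℕ => ∑ n ∈ range N, (-Real.log (n + x) + Real.log (n + 1)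
      + (1 - x) * (Real.log (n + 1) - Real.log (n + 2)))) atTop (𝓝 (Real.log (Real.Gamma x))) := by
  have h := Real.BohrMollerup.tendsto_log_gamma hx0
  have hl : ∀ c : ℝ, Tendsto (fun N : ℕ => Real.log (N + c) - Real.log N) atTop (𝓝 0) := by
    intro c
    have h1 : Tendsto (fun N : ℕ => Real.log (1 + c / N)) atTop (𝓝 0) := by
      have : Tendsto (fun N : ℕ => 1 + c / (N : ℝ)) atTop (𝓝 1) := by
        simpa using (tendsto_const_div_atTop_nhds_zero_nat c).const_add 1
      simpa using this.log one_ne_zero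
    refine h1.congr' ?_
    filter_upwards [eventually_gt_atTop (Nat.ceil |c|)] with N hN
    have hNc : |c| < N := (Nat.le_ceil _).trans_lt (by exact_mod_cast hN)
    have hN0 : (0 : ℝ) < N := (abs_nonneg c).trans_lt hNc
    have : (N : ℝ) + c ≠ 0 := by linarith [neg_abs_le c]
    rw [← Real.log_div this hN0.ne']
    congr 1; field_simp
  have hs : ∀ N : ℕ, ∑ n ∈ range N, (-Real.log (n + x) + Real.log (n + 1)
      + (1 - x) * (Real.log (n + 1) - Real.log (n + 2))) =
      -∑ n ∈ range N, Real.log (x + n) + Real.log (N.factorial) - (1 - x) * Real.log (N + 1) := by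
    intro N
    induction N with
    | zero => simp
    | succ k ih =>
      rw [sum_range_succ, ih, sum_range_succ, Nat.factorial_succ]
      push_cast
      rw [Real.log_mul (by positivity) (by positivity), add_comm x k,
        show (k : ℝ) + 1 + 1 = k + 2 by ring]
      ring
  have := (h.add (hl x)).sub ((hl 1).const_mul (1 - x))
  simp only [mul_zero, add_zero, sub_zero] at this
  refine this.congr fun N => ?_
  rw [hs, Real.BohrMollerup.logGammaSeq, sum_range_succ, add_comm x N]
  ring

lemma hasDerivAt_diff {x : ℝ} (hx0 : 0 < x) (hx1 : x ≤ 1) :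
    hurwitzZeta (x : UnitAddCircle) 0 - hurwitzZeta ((1 : ℝ) : UnitAddCircle) 0 = 1 - x ∧
    HasDerivAt (fun s => hurwitzZeta (x : UnitAddCircle) s -
      hurwitzZeta ((1 : ℝ) : UnitAddCircle) s) (Real.log (Real.Gamma x)) 0 := by
  set D : ℂ → ℂ := fun s => hurwitzZeta (x : UnitAddCircle) s -
      hurwitzZeta ((1 : ℝ) : UnitAddCircle) s with hD
  have hDd : Differentiable ℂ D := differentiable_hurwitzZeta_sub_hurwitzZeta _ _
  set U := Metric.ball (1 : ℂ) (5 / 4)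
  have hU : IsOpen U := Metric.isOpen_ball
  have h0 : (0 : ℂ) ∈ U := by simp [U]; norm_num
  have h2 : (2 : ℂ) ∈ U := by
    simp only [U, Metric.mem_ball, dist_eq_norm]; norm_num
  have hF : ∀ n, DifferentiableOn ℂ (accTerm x n) U := fun n s _ =>
    (hasDerivAt_accTerm hx0 n s).differentiableAt.differentiableWithinAt
  have hGd := Complex.differentiableOn_tsum_of_summable_norm (summable_bound x) hF hU
    (fun n s hs => norm_accTerm_le hx0 hx1 n s hs)
  have hsum := Complex.hasSum_deriv_of_summable_norm (summable_bound x) hF hU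
    (fun n s hs => norm_accTerm_le hx0 hx1 n s hs) h0
  have hEq : Set.EqOn (fun s => D s - ((1 - x : ℝ) : ℂ)) (fun s => ∑' n, accTerm x n s) U := by
    refine AnalyticOnNhd.eqOn_of_preconnected_of_eventuallyEq (z₀ := 2)
      ((hDd.sub_const _).differentiableOn.analyticOnNhd hU) (hGd.analyticOnNhd hU)
      (convex_ball _ _).isPreconnected h2 ?_
    have : {s : ℂ | 1 < s.re} ∈ 𝓝 (2 : ℂ) :=
      (isOpen_lt continuous_const Complex.continuous_re).mem_nhds (by simp)
    filter_upwards [this] with s hs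
    exact (hasSum_accTerm hx0 hx1 hs).tsum_eq.symm
  constructor
  · have := hEq h0
    simp [accTerm] at this
    simp only [hD] at this
    linear_combination this
  · have hev : (fun s => D s - ((1 - x : ℝ) : ℂ)) =ᶠ[𝓝 0] (fun s => ∑' n, accTerm x n s) :=
      hEq.eventuallyEq_of_mem (hU.mem_nhds h0)
    rw [← hev.deriv_eq, deriv_sub_const] at hsum
    have ht := hsum.tendsto_sum_nat
    have ht2 := (Complex.continuous_ofReal.tendsto _).comp (tendsto_partial hx0)
    have : deriv D 0 = (Real.log (Real.Gamma x) : ℂ) := by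
      refine tendsto_nhds_unique ht (ht2.congr fun N => ?_)
      simp only [Function.comp]
      rw [Complex.ofReal_sum]
      refine sum_congr rfl fun n _ => ?_
      rw [(hasDerivAt_accTerm hx0 n 0).deriv]
      simp only [neg_zero, Complex.cpow_zero]
      push_cast
      ring
    rw [← this]
    exact (hDd 0).hasDerivAt

theorem deriv_L_at_zero (q : ℕ) (hq : 0 < q) (f : ℕ → ℂ)
    (hper : ∀ n : ℕ, f (n + q) = f n)
    (hsum : ∑ a ∈ Finset.Icc 1 q, f a = 0)
    (L : ℂ → ℂ)
    (hL : ∀ s : ℂ, L s = (q : ℂ) ^ (-s) * ∑ a ∈ Finset.Icc 1 q,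
        f a * hurwitzZeta (↑((a : ℝ) / q) : UnitAddCircle) s) :
    deriv L 0 = (Real.log q / q) * ∑ a ∈ Finset.Icc 1 q, (a : ℂ) * f a +
      ∑ a ∈ Finset.Icc 1 q, f a * Real.log (Real.Gamma ((a : ℝ) / q)) := by
  have hqr : (0 : ℝ) < q := by exact_mod_cast hq
  have hqc : (q : ℂ) ≠ 0 := by exact_mod_cast hq.ne'
  have hx : ∀ a ∈ Finset.Icc 1 q, 0 < (a : ℝ) / q ∧ (a : ℝ) / q ≤ 1 := by
    intro a ha
    rw [Finset.mem_Icc] at ha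
    have h1 : (0 : ℝ) < a := by exact_mod_cast ha.1
    have h2 : (a : ℝ) ≤ q := by exact_mod_cast ha.2
    exact ⟨by positivity, (div_le_one hqr).2 h2⟩
  have hLeq : L = fun s => ((q : ℝ) : ℂ) ^ (-s) * ∑ a ∈ Finset.Icc 1 q,
      f a * (hurwitzZeta (↑((a : ℝ) / q) : UnitAddCircle) s -
        hurwitzZeta ((1 : ℝ) : UnitAddCircle) s) := by
    ext s
    rw [hL]
    simp only [mul_sub, Finset.sum_sub_distrib, ← Finset.sum_mul, hsum, zero_mul, sub_zero,
      Complex.ofReal_natCast]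
  have hS := HasDerivAt.fun_sum (u := Finset.Icc 1 q) fun a ha =>
    (hasDerivAt_diff (hx a ha).1 (hx a ha).2).2.const_mul (f a)
  have hd := (hasDerivAt_cpow_neg q hqr 0).mul hS
  have hv : ∑ a ∈ Finset.Icc 1 q,
      f a * (hurwitzZeta (↑((a : ℝ) / q) : UnitAddCircle) 0 -
        hurwitzZeta ((1 : ℝ) : UnitAddCircle) 0) = -(∑ a ∈ Finset.Icc 1 q, (a : ℂ) * f a) / q := by
    rw [Finset.sum_congr rfl fun a ha => by rw [(hasDerivAt_diff (hx a ha).1 (hx a ha).2).1]]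
    simp only [mul_sub, mul_one, Finset.sum_sub_distrib, hsum, zero_sub]
    rw [neg_div, Finset.sum_div]
    congr 1
    refine Finset.sum_congr rfl fun a _ => ?_
    push_cast; ring
  rw [hLeq]
  refine hd.deriv.trans ?_
  rw [hv]
  simp only [neg_zero, Complex.cpow_zero]
  ring
end

section
/- Let p > 7 be a prime. Assume Conjecture R_p: the real numbers log Γ(a/p) for 1 ≤ a ≤ p-1 are linearly independent over the field of algebraic numbers. Let f_1, …, f_r (r > 2) be Q̄-valued, odd, p-periodic functions with f̂_j(p) = 0 and L(1,f_j) ≠ 0, which are linearly independent over Q̄. Then at most three of the numbers L'(1,f_1), …, L'(1,f_r) are algebraic. -/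
open Finset Filter Topology

lemma aux_taylor (m : ℕ) (hm : 1 ≤ m) (x : ℝ) (hx0 : 0 ≤ x) (hx1 : x ≤ 1) (s : ℂ)
    (hs : -(1/2) < s.re) (hs3 : ‖s‖ < 3) :
    ‖((m : ℂ) + (x : ℂ)) ^ (-s) - ((m : ℂ) ^ (-s) + x * (-s * (m : ℂ) ^ (-s - 1)))‖
      ≤ 12 * (m : ℝ) ^ (-(3/2) : ℝ) := by
  have hm' : (1 : ℝ) ≤ m := by exact_mod_cast hm
  have hd : ∀ (e : ℂ) (t : ℝ), 0 ≤ t →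
      HasDerivAt (fun t : ℝ => ((m : ℂ) + (t : ℂ)) ^ e) (e * ((m : ℂ) + (t : ℂ)) ^ (e - 1)) t := by
    intro e t ht
    have h1 : HasDerivAt (fun z : ℂ => (m : ℂ) + z) 1 (t : ℂ) := by
      simpa using (hasDerivAt_id (t : ℂ)).const_add (m : ℂ)
    have h2 := h1.cpow_const (c := e) (by
      left; simp; linarith)
    simpa using h2.comp_ofReal
  have hn : ∀ (e : ℂ) (t : ℝ), 0 ≤ t → ‖((m : ℂ) + (t : ℂ)) ^ e‖ = ((m : ℝ) + t) ^ e.re := by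
    intro e t ht
    rw [← Complex.norm_cpow_eq_rpow_re_of_pos (by linarith)]
    push_cast; rfl
  set K : ℝ := 12 * (m : ℝ) ^ (-(3/2) : ℝ) with hK
  have hK0 : 0 ≤ K := by positivity
  have hb2 : ∀ t ∈ Set.Icc (0 : ℝ) 1, ‖-s * ((-s - 1) * ((m : ℂ) + (t : ℂ)) ^ (-s - 1 - 1))‖ ≤ K := by
    intro t ht
    rw [norm_mul, norm_mul, hn _ _ ht.1, norm_neg]
    have e1 : ‖-s - 1‖ ≤ 4 := by
      calc ‖-s - 1‖ ≤ ‖-s‖ + ‖(1 : ℂ)‖ := norm_sub_le _ _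
        _ ≤ 4 := by rw [norm_neg, norm_one]; linarith
    have e2 : ((m : ℝ) + t) ^ (-s - 1 - 1).re ≤ (m : ℝ) ^ (-(3/2) : ℝ) := by
      calc ((m : ℝ) + t) ^ (-s - 1 - 1).re ≤ ((m : ℝ) + t) ^ (-(3/2) : ℝ) := by
            apply Real.rpow_le_rpow_of_exponent_le (by linarith [ht.1])
            simp; linarith
        _ ≤ (m : ℝ) ^ (-(3/2) : ℝ) := by
            apply Real.rpow_le_rpow_of_nonpos (by linarith) (by linarith [ht.1]) (by norm_num)
    calc ‖s‖ * (‖-s - 1‖ * ((m : ℝ) + t) ^ (-s - 1 - 1).re) ≤ 3 * (4 * (m : ℝ) ^ (-(3/2) : ℝ)) := by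
          have : 0 ≤ m + t := by linarith [ht.1]
          gcongr
      _ = K := by rw [hK]; ring
  have hb1 : ∀ t ∈ Set.Icc (0 : ℝ) 1,
      ‖-s * ((m : ℂ) + (t : ℂ)) ^ (-s - 1) - -s * (m : ℂ) ^ (-s - 1)‖ ≤ K := by
    intro t ht
    have := Convex.norm_image_sub_le_of_norm_hasDerivWithin_le
      (f := fun t : ℝ => -s * ((m : ℂ) + (t : ℂ)) ^ (-s - 1)) (s := Set.Icc (0 : ℝ) 1) (x := 0) (y := t)
      (fun t ht => ((hd (-s - 1) t ht.1).const_mul (-s)).hasDerivWithinAt) hb2 (convex_Icc 0 1)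
      (by simp) ht
    simp only [Complex.ofReal_zero, add_zero, sub_zero] at this
    refine this.trans ?_
    rw [Real.norm_of_nonneg ht.1]
    nlinarith [ht.2]
  have := Convex.norm_image_sub_le_of_norm_hasDerivWithin_le
      (f := fun t : ℝ => ((m : ℂ) + (t : ℂ)) ^ (-s) - (t : ℂ) * (-s * (m : ℂ) ^ (-s - 1)))
      (s := Set.Icc (0 : ℝ) 1) (x := 0) (y := x)
      (fun t ht => by
        have h := (hd (-s) t ht.1).sub (((hasDerivAt_id (t : ℂ)).comp_ofReal).mul_const (-s * (m : ℂ) ^ (-s - 1)))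
        rw [one_mul] at h
        exact h.hasDerivWithinAt) hb1 (convex_Icc 0 1)
      (by simp) ⟨hx0, hx1⟩
  simp only [Complex.ofReal_zero, add_zero, sub_zero, zero_mul] at this
  rw [Real.norm_of_nonneg hx0] at this
  have e : ((m : ℂ) + (x : ℂ)) ^ (-s) - ((m : ℂ) ^ (-s) + x * (-s * (m : ℂ) ^ (-s - 1)))
    = ((m : ℂ) + (x : ℂ)) ^ (-s) - x * (-s * (m : ℂ) ^ (-s - 1)) - (m : ℂ) ^ (-s) := by ring
  rw [e]
  refine this.trans ?_
  nlinarith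

lemma aux_bound {p : ℕ} [NeZero p] (G : ZMod p → ℂ) (hG0 : G 0 = 0) (hG1 : ∑ a, G a = 0)
    (hG2 : ∑ a, G a * (a.val : ℂ) = 0) :
    ∃ u : ℕ → ℝ, Summable u ∧ ∀ m : ℕ, ∀ s : ℂ, -(1/2) < s.re → ‖s‖ < 3 →
      ‖∑ a : ZMod p, G a * ((m : ℂ) + ((a.val / p : ℝ) : ℂ)) ^ (-s)‖ ≤ u m := by
  have hp : (0 : ℝ) < p := by exact_mod_cast NeZero.pos p
  refine ⟨fun m => if m = 0 then ∑ a : ZMod p, ‖G a‖ * ((a.val / p : ℝ)) ^ (-3 : ℝ) else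
    (∑ a : ZMod p, ‖G a‖) * (12 * (m : ℝ) ^ (-(3/2) : ℝ)), ?_, ?_⟩
  · rw [← summable_nat_add_iff 1]
    simp only [Nat.add_eq_zero_iff, one_ne_zero, and_false, if_false]
    apply Summable.mul_left
    apply Summable.mul_left
    exact (summable_nat_add_iff 1 (f := fun m : ℕ => (m : ℝ) ^ (-(3/2) : ℝ))).2
      (Real.summable_nat_rpow.2 (by norm_num))
  · intro m s hs hs3
    by_cases hm : m = 0
    · subst hm
      simp only [if_true, Nat.cast_zero, zero_add]
      refine (norm_sum_le _ _).trans (Finset.sum_le_sum fun a _ => ?_)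
      by_cases ha : a = 0
      · simp [ha, hG0]
      rw [norm_mul]
      have hx : (0 : ℝ) < a.val / p := div_pos (by
        exact_mod_cast Nat.pos_of_ne_zero (by simpa using ha)) hp
      have hx1 : (a.val / p : ℝ) ≤ 1 := (div_le_one hp).2 (by exact_mod_cast (ZMod.val_lt a).le)
      rw [Complex.norm_cpow_eq_rpow_re_of_pos hx]
      gcongr ?_ * ?_
      apply Real.rpow_le_rpow_of_exponent_ge hx hx1
      have := Complex.re_le_norm s
      simp; linarith
    · simp only [hm, if_false]
      have key : ∑ a : ZMod p, G a * ((m : ℂ) + ((a.val / p : ℝ) : ℂ)) ^ (-s)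
        = ∑ a : ZMod p, G a * (((m : ℂ) + ((a.val / p : ℝ) : ℂ)) ^ (-s) -
          ((m : ℂ) ^ (-s) + ((a.val / p : ℝ) : ℂ) * (-s * (m : ℂ) ^ (-s - 1)))) := by
        have e : ∀ a : ZMod p, G a * (((m : ℂ) + ((a.val / p : ℝ) : ℂ)) ^ (-s) -
          ((m : ℂ) ^ (-s) + ((a.val / p : ℝ) : ℂ) * (-s * (m : ℂ) ^ (-s - 1)))) =
          G a * ((m : ℂ) + ((a.val / p : ℝ) : ℂ)) ^ (-s) - (G a * (m : ℂ) ^ (-s) +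
           (G a * (a.val : ℂ)) * ((-s * (m : ℂ) ^ (-s - 1)) / p)) := by
          intro a; push_cast; ring
        simp_rw [e]
        rw [Finset.sum_sub_distrib, Finset.sum_add_distrib, ← Finset.sum_mul, ← Finset.sum_mul,
          hG1, hG2]
        simp
      rw [key, Finset.sum_mul]
      refine (norm_sum_le _ _).trans (Finset.sum_le_sum fun a _ => ?_)
      rw [norm_mul]
      gcongr
      exact aux_taylor m (Nat.pos_of_ne_zero hm) _ (by positivity)
        ((div_le_one hp).2 (by exact_mod_cast (ZMod.val_lt a).le)) s hs hs3

lemma aux_LG {p : ℕ} [NeZero p] (G : ZMod p → ℂ) (hG0 : G 0 = 0) (hG1 : ∑ a, G a = 0)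
    (hG2 : ∑ a, G a * (a.val : ℂ) = 0) :
    ZMod.LFunction G 0 = 0 ∧ HasDerivAt (ZMod.LFunction G)
      (∑ a : ZMod p, G a * ((Real.log (Real.Gamma (a.val / p)) : ℝ) : ℂ)) 0 := by
  have hp : (0 : ℝ) < p := by exact_mod_cast NeZero.pos p
  have hpc : (p : ℂ) ≠ 0 := by exact_mod_cast hp.ne'
  obtain ⟨u, hu, hub⟩ := aux_bound G hG0 hG1 hG2
  set T : ℕ → ℂ → ℂ := fun m s => ∑ a : ZMod p, G a * ((m : ℂ) + ((a.val / p : ℝ) : ℂ)) ^ (-s) with hT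
  set U : Set ℂ := {s : ℂ | -(1/2) < s.re} ∩ Metric.ball 0 3 with hU
  have hUo : IsOpen U := (isOpen_lt continuous_const Complex.continuous_re).inter Metric.isOpen_ball
  have hUc : Convex ℝ U := (convex_halfSpace_re_gt _).inter (convex_ball _ _)
  have hpos : ∀ a : ZMod p, a ≠ 0 → (0 : ℝ) < a.val / p := fun a ha => div_pos (by
        exact_mod_cast Nat.pos_of_ne_zero (by simpa using ha)) hp
  have hTd' : ∀ m s, HasDerivAt (T m) (∑ a : ZMod p, G a * (((m : ℂ) + ((a.val / p : ℝ) : ℂ)) ^ (-s)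
      * Complex.log ((m : ℂ) + ((a.val / p : ℝ) : ℂ)) * (-1))) s := by
    intro m s
    apply HasDerivAt.fun_sum
    intro a _
    by_cases ha : a = 0
    · simp [ha, hG0, hasDerivAt_const]
    · apply HasDerivAt.const_mul
      apply HasDerivAt.const_cpow (hasDerivAt_neg s)
      left
      have := hpos a ha
      have h2 : (0 : ℝ) < (m : ℝ) + a.val / p := by positivity
      exact_mod_cast h2.ne'
  have hTd : ∀ m, DifferentiableOn ℂ (T m) U := fun m s _ =>
    (hTd' m s).differentiableAt.differentiableWithinAt
  have hTb : ∀ m s, s ∈ U → ‖T m s‖ ≤ u m := fun m s hs => hub m s hs.1 (by simpa using hs.2)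
  have h0U : (0 : ℂ) ∈ U := by simp [hU]
  have h2U : (2 : ℂ) ∈ U := by norm_num [hU]
  have hWd := Complex.differentiableOn_tsum_of_summable_norm hu hTd hUo hTb
  have hWs := Complex.hasSum_deriv_of_summable_norm hu hTd hUo hTb h0U
  set W : ℂ → ℂ := fun w => ∑' m, T m w with hW
  -- identity
  have hLd := ZMod.differentiable_LFunction_of_sum_zero hG1
  have hEq : Set.EqOn (ZMod.LFunction G) (fun s => (p : ℂ) ^ (-s) * W s) U := by
    have hpd : Differentiable ℂ (fun s : ℂ => (p : ℂ) ^ (-s)) := fun s =>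
      (DifferentiableAt.const_cpow (differentiableAt_id.neg) (Or.inl hpc))
    apply AnalyticOnNhd.eqOn_of_preconnected_of_eventuallyEq (𝕜 := ℂ) (z₀ := 2)
      (hLd.differentiableOn.analyticOnNhd hUo)
      ((hpd.differentiableOn.mul hWd).analyticOnNhd hUo) hUc.isPreconnected h2U
    have : {s : ℂ | 1 < s.re} ∈ 𝓝 (2 : ℂ) :=
      (isOpen_lt continuous_const Complex.continuous_re).mem_nhds (by simp)
    filter_upwards [this] with s hs
    simp only [ZMod.LFunction]
    congr 1
    rw [hW]
    symm
    apply HasSum.tsum_eq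
    apply hasSum_sum
    intro a _
    apply HasSum.mul_left
    have hmem : (a.val / p : ℝ) ∈ Set.Icc (0 : ℝ) 1 := ⟨by positivity,
      (div_le_one hp).2 (by exact_mod_cast (ZMod.val_lt a).le)⟩
    have := HurwitzZeta.hasSum_hurwitzZeta_of_one_lt_re hmem hs
    rw [ZMod.toAddCircle_apply]
    simpa only [Complex.cpow_neg, one_div] using this
  have hW0 : W 0 = 0 := by simp [hW, hT, hG1]
  have hWD : HasDerivAt W (deriv W 0) 0 := (hWd.differentiableAt (hUo.mem_nhds h0U)).hasDerivAt
  have hder : deriv W 0 = ∑ a : ZMod p, G a * ((Real.log (Real.Gamma (a.val / p)) : ℝ) : ℂ) := by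
    have t1 := (hWs.tendsto_sum_nat).comp (tendsto_add_atTop_nat 1)
    have t2 : Tendsto (fun n : ℕ => ∑ a : ZMod p, G a *
        ((Real.BohrMollerup.logGammaSeq (a.val / p) n : ℝ) : ℂ)) atTop
        (𝓝 (∑ a : ZMod p, G a * ((Real.log (Real.Gamma (a.val / p)) : ℝ) : ℂ))) := by
      apply tendsto_finsetSum
      intro a _
      by_cases ha : a = 0
      · simp [ha, hG0]
      · apply Tendsto.const_mul
        exact (Complex.continuous_ofReal.tendsto _).comp
          (Real.BohrMollerup.tendsto_log_gamma (hpos a ha))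
    refine tendsto_nhds_unique t1 (t2.congr fun n => ?_)
    simp only [Function.comp]
    have e1 : ∀ m, deriv (T m) 0 = -∑ a : ZMod p, G a * ((Real.log (a.val / p + m) : ℝ) : ℂ) := by
      intro m
      rw [(hTd' m 0).deriv, ← Finset.sum_neg_distrib]
      refine Finset.sum_congr rfl fun a _ => ?_
      rw [neg_zero, Complex.cpow_zero, Complex.ofReal_log (by positivity)]
      push_cast
      rw [add_comm]; ring
    simp_rw [e1]
    rw [Finset.sum_neg_distrib, Finset.sum_comm]
    have e2 : ∀ a : ZMod p, G a * ((Real.BohrMollerup.logGammaSeq (a.val / p) n : ℝ) : ℂ) =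
      G a * (a.val : ℂ) * ((Real.log n : ℝ) / p) + G a * ((Real.log (n.factorial) : ℝ) : ℂ)
      - ∑ m ∈ Finset.range (n + 1), G a * ((Real.log (a.val / p + m) : ℝ) : ℂ) := by
      intro a
      rw [Real.BohrMollerup.logGammaSeq, ← Finset.mul_sum]
      push_cast
      ring
    simp_rw [e2]
    rw [Finset.sum_sub_distrib, Finset.sum_add_distrib, ← Finset.sum_mul, ← Finset.sum_mul, hG1, hG2]
    simp
  constructor
  · rw [hEq h0U]; simp [hW0]
  · rw [← hder]
    have h1 : HasDerivAt (fun s : ℂ => (p : ℂ) ^ (-s)) ((p : ℂ) ^ (-(0 : ℂ)) * Complex.log p * (-1)) 0 :=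
      HasDerivAt.const_cpow (hasDerivAt_neg 0) (Or.inl hpc)
    have h2 := h1.mul hWD
    rw [hW0] at h2
    simp only [neg_zero, Complex.cpow_zero, one_mul, mul_zero, zero_add] at h2
    exact h2.congr_of_eventuallyEq (hEq.eventuallyEq_of_mem (hUo.mem_nhds h0U))

lemma aux_FE {p : ℕ} [NeZero p] (F : ZMod p → ℂ) (hF : F.Odd) (hF1 : ∑ a, F a = 0)
    (hL0 : ZMod.LFunction (ZMod.dft F) 0 = 0) (D : ℂ)
    (hD : HasDerivAt (ZMod.LFunction (ZMod.dft F)) D 0)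
    (hF' : deriv (ZMod.LFunction F) 1 = 0) : D = 0 := by
  have hpc : (p : ℂ) ≠ 0 := NeZero.ne _
  have hpi : (2 * (Real.pi : ℂ)) ≠ 0 := by simp [Real.pi_ne_zero]
  set h : ℂ → ℂ := fun s => (p : ℂ) ^ (s - 1) * (2 * Real.pi : ℂ) ^ (-s) * (s * Complex.Gamma s) *
    (s⁻¹ * (Complex.exp (Real.pi * Complex.I * s / 2) - Complex.exp (-Real.pi * Complex.I * s / 2)))
    with hh
  have hFneg : ZMod.LFunction (ZMod.dft fun x => F (-x)) = fun s => - ZMod.LFunction (ZMod.dft F) s := by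
    have : (fun x => F (-x)) = -F := by ext x; simpa using hF x
    rw [this, map_neg]
    ext s
    simp [ZMod.LFunction]
  have hF0 : F 0 = 0 := by
    have := hF 0
    simp only [neg_zero] at this
    exact self_eq_neg.1 this
  have hev : ∀ᶠ s in 𝓝[≠] (0 : ℂ), ZMod.LFunction F (1 - s) = h s * ZMod.LFunction (ZMod.dft F) s := by
    have hb : Metric.ball (0 : ℂ) 1 ∈ 𝓝[≠] (0 : ℂ) := nhdsWithin_le_nhds (Metric.ball_mem_nhds _ one_pos)
    filter_upwards [hb, self_mem_nhdsWithin] with s hs hs0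
    have hs0' : s ≠ 0 := hs0
    rw [ZMod.LFunction_one_sub F _ (Or.inl hF0), hFneg, hh]
    · field_simp
      ring
    · intro n hn
      rcases Nat.eq_zero_or_pos n with rfl | hn0
      · simp at hn; exact hs0' hn
      · rw [hn] at hs
        simp at hs
        omega
  have hexp : HasDerivAt (fun s : ℂ => Complex.exp (Real.pi * Complex.I * s / 2) -
      Complex.exp (-Real.pi * Complex.I * s / 2)) (Real.pi * Complex.I) 0 := by
    have h1 : ∀ c : ℂ, HasDerivAt (fun s : ℂ => Complex.exp (c * s / 2)) (c / 2) 0 := by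
      intro c
      have := (((hasDerivAt_id (0 : ℂ)).const_mul c).div_const 2).cexp
      simpa using this
    have := (h1 (Real.pi * Complex.I)).sub (h1 (-Real.pi * Complex.I))
    refine this.congr_deriv ?_
    ring
  have hlim : Tendsto h (𝓝[≠] 0) (𝓝 ((p : ℂ) ^ ((0 : ℂ) - 1) * (2 * Real.pi : ℂ) ^ (-(0 : ℂ)) * 1 *
      (Real.pi * Complex.I))) := by
    refine Tendsto.mul (Tendsto.mul (Tendsto.mul ?_ ?_) Complex.tendsto_self_mul_Gamma_nhds_zero) ?_
    · have : ContinuousAt (fun s : ℂ => (p : ℂ) ^ (s - 1)) 0 :=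
        ContinuousAt.const_cpow (by fun_prop) (Or.inl hpc)
      exact this.tendsto.mono_left nhdsWithin_le_nhds
    · have : ContinuousAt (fun s : ℂ => (2 * Real.pi : ℂ) ^ (-s)) 0 :=
        ContinuousAt.const_cpow (by fun_prop) (Or.inl hpi)
      exact this.tendsto.mono_left nhdsWithin_le_nhds
    · have := hexp.tendsto_slope
      refine this.congr fun s => ?_
      simp [slope_def_field, div_eq_inv_mul]
  set h0 := ((p : ℂ) ^ ((0 : ℂ) - 1) * (2 * Real.pi : ℂ) ^ (-(0 : ℂ)) * 1 * (Real.pi * Complex.I))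
  have hh0 : h0 ≠ 0 := by simp [h0, hpc, Real.pi_ne_zero]
  have hFd := ZMod.differentiable_LFunction_of_sum_zero hF1
  have hcomp : HasDerivAt (fun s => ZMod.LFunction F (1 - s)) 0 0 := by
    have h1 : HasDerivAt (ZMod.LFunction F) 0 (1 - 0) := by
      rw [sub_zero, ← hF']; exact (hFd 1).hasDerivAt
    have := h1.comp (0 : ℂ) ((hasDerivAt_id (0 : ℂ)).const_sub 1)
    rw [zero_mul] at this
    exact this
  have hL1 : ZMod.LFunction F 1 = 0 := by
    have t1 : Tendsto (fun s => ZMod.LFunction F (1 - s)) (𝓝[≠] 0) (𝓝 (ZMod.LFunction F 1)) := by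
      have := hcomp.continuousAt.tendsto
      simp only [sub_zero] at this
      exact this.mono_left nhdsWithin_le_nhds
    have t2 : Tendsto (fun s => h s * ZMod.LFunction (ZMod.dft F) s) (𝓝[≠] 0) (𝓝 (h0 * 0)) := by
      apply hlim.mul
      have := hD.continuousAt.tendsto
      rw [hL0] at this
      exact this.mono_left nhdsWithin_le_nhds
    rw [mul_zero] at t2
    exact tendsto_nhds_unique t1 (t2.congr' (hev.mono fun s hs => hs.symm))
  have s1 := hcomp.tendsto_slope
  have s2 := hlim.mul hD.tendsto_slope
  have := tendsto_nhds_unique s1 (s2.congr' (hev.mono fun s hs => by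
    simp only [slope_def_field, sub_zero, hL1, hL0, hs]; ring))
  rcases mul_eq_zero.1 this.symm with h | h
  · exact absurd h hh0
  · exact h

lemma aux_L {p : ℕ} [NeZero p] (f : ℤ → ℂ) (hper : ∀ n : ℤ, f (n + p) = f n) (n : ℤ) :
    f (((n : ZMod p).val : ℕ) : ℤ) = f n := by
  rw [ZMod.val_intCast]
  have hP : Function.Periodic f (p : ℤ) := hper
  have := hP.int_mul (n / p) (n % p)
  rw [← this]
  congr 1
  have := Int.emod_add_mul_ediv n p
  simp only [Int.cast_id]
  linarith [mul_comm (n / (p : ℤ)) p]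

/-- Theorem 1: let `p > 7` be prime, assume the Q̄-linear independence of
`{log Γ(a/p) : 1 ≤ a ≤ p-1}`, and let `f_1, …, f_r` (`r > 2`) be Q̄-valued, odd,
`p`-periodic, Q̄-linearly independent functions with `∑_{a=1}^p f_j a = 0` and
`L(1,f_j) ≠ 0`. Then at most three of `L'(1,f_1), …, L'(1,f_r)` are algebraic. -/
theorem at_most_three_algebraic_derivs (p : ℕ) (hp : p.Prime) (hp7 : 7 < p)
    (hconj : ∀ c : ℕ → ℂ, (∀ a, IsAlgebraic ℚ (c a)) →
      (∑ a ∈ Finset.Icc 1 (p - 1),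
        c a * (Real.log (Real.Gamma ((a : ℝ) / p)) : ℂ)) = 0 →
      ∀ a ∈ Finset.Icc 1 (p - 1), c a = 0)
    (r : ℕ) (hr : 2 < r)
    (f : Fin r → ℤ → ℂ)
    (halg : ∀ j (n : ℤ), IsAlgebraic ℚ (f j n))
    (hper : ∀ j (n : ℤ), f j (n + p) = f j n)
    (hodd : ∀ j (n : ℤ), f j (p - n) = -f j n)
    (hsum : ∀ j, ∑ a ∈ Finset.Icc 1 p, f j a = 0)
    (hindep : ∀ α : Fin r → ℂ, (∀ j, IsAlgebraic ℚ (α j)) →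
      (∀ n : ℤ, ∑ j, α j * f j n = 0) → ∀ j, α j = 0)
    (L : Fin r → ℂ → ℂ)
    (hLdiff : ∀ j, Differentiable ℂ (L j))
    (hLser : ∀ j (s : ℂ), 1 < s.re → L j s = ∑' n : ℕ, f j (n + 1) / ((n : ℂ) + 1) ^ s)
    (hLone : ∀ j, L j 1 ≠ 0) :
    {j : Fin r | IsAlgebraic ℚ (deriv (L j) 1)}.ncard ≤ 3 := by
  classical
  have : NeZero p := ⟨hp.ne_zero⟩
  have hpp := hp.pos
  by_contra! hcard
  set S : Set (Fin r) := {j : Fin r | IsAlgebraic ℚ (deriv (L j) 1)} with hS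
  set F : Fin r → ZMod p → ℂ := fun j x => f j ((x.val : ℕ) : ℤ) with hFdef
  have hFf : ∀ j (n : ℤ), F j (n : ZMod p) = f j n := fun j n => aux_L (f j) (hper j) n
  have hFodd : ∀ j, (F j).Odd := by
    intro j x
    obtain ⟨n, rfl⟩ := ZMod.intCast_surjective x
    have h1 : ((-(n : ZMod p))) = (((p : ℤ) - n : ℤ) : ZMod p) := by push_cast; simp
    rw [h1, hFf, hFf, hodd]
  have hodd_sum : ∀ H : ZMod p → ℂ, H.Odd → ∑ a, H a = 0 := by
    intro H hH
    have h1 : ∑ a, H (-a) = ∑ a, H a := Equiv.sum_comp (Equiv.neg (ZMod p)) H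
    have h2 : ∑ a, H (-a) = - ∑ a, H a := by
      rw [← Finset.sum_neg_distrib]; exact Finset.sum_congr rfl fun a _ => hH a
    exact self_eq_neg.1 (h1.symm.trans h2)
  have hFsum : ∀ j, ∑ a, F j a = 0 := fun j => hodd_sum _ (hFodd j)
  have hLF : ∀ j, L j = ZMod.LFunction (F j) := by
    intro j
    have hd := ZMod.differentiable_LFunction_of_sum_zero (hFsum j)
    apply AnalyticOnNhd.eq_of_eventuallyEq (𝕜 := ℂ) (z₀ := 2)
      ((hLdiff j).differentiableOn.analyticOnNhd isOpen_univ)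
      (hd.differentiableOn.analyticOnNhd isOpen_univ)
    have : {s : ℂ | 1 < s.re} ∈ 𝓝 (2 : ℂ) :=
      (isOpen_lt continuous_const Complex.continuous_re).mem_nhds (by simp)
    filter_upwards [this] with s hs
    have hs' : 1 < s.re := hs
    rw [hLser j s hs', ZMod.LFunction_eq_LSeries _ hs', LSeries,
      (ZMod.LSeriesSummable_of_one_lt_re (F j) hs').tsum_eq_zero_add, LSeries.term_zero, zero_add]
    congr 1
    ext n
    rw [LSeries.term_of_ne_zero (by omega)]
    have := hFf j ((n + 1 : ℕ) : ℤ)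
    push_cast at this ⊢
    rw [this]
  -- algebraicity
  have hFalg : ∀ j x, IsAlgebraic ℚ (F j x) := fun j x => halg j _
  have hchar : ∀ x : ZMod p, IsAlgebraic ℚ (ZMod.stdAddChar x : ℂ) := by
    intro x
    have h1 : (ZMod.stdAddChar x : ℂ) ^ p = 1 := by
      rw [← AddChar.map_nsmul_eq_pow]; simp
    exact IsAlgebraic.of_pow hpp (by rw [h1]; exact isAlgebraic_one)
  have hsumalg : ∀ {ι : Type} (s : Finset ι) (g : ι → ℂ), (∀ i, IsAlgebraic ℚ (g i)) →
      IsAlgebraic ℚ (∑ i ∈ s, g i) := by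
    intro ι s g hg
    rw [← mem_algebraicClosure_iff]
    exact sum_mem fun i _ => mem_algebraicClosure_iff.2 (hg i)
  have hGalg : ∀ j x, IsAlgebraic ℚ (ZMod.dft (F j) x) := by
    intro j x
    rw [ZMod.dft_apply]
    exact hsumalg _ _ fun i => by
      rw [smul_eq_mul]; exact (hchar _).mul (hFalg j i)
  set A : Fin r → ℂ := fun j => ∑ a : ZMod p, ZMod.dft (F j) a * (a.val : ℂ) with hA
  have hAalg : ∀ j, IsAlgebraic ℚ (A j) := fun j => hsumalg _ _ fun i =>
    (hGalg j i).mul (isAlgebraic_natCast _)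
  -- linear algebra
  obtain ⟨α, hαalg, hαne, hα1, hα2⟩ : ∃ α : Fin r → ℂ, (∀ j, IsAlgebraic ℚ (α j)) ∧ (∃ j, α j ≠ 0) ∧
      ∑ j, α j * A j = 0 ∧ ∑ j, α j * deriv (L j) 1 = 0 := by
    let K := algebraicClosure ℚ ℂ
    let A' : S → K := fun j => ⟨A j, mem_algebraicClosure_iff.2 (hAalg j)⟩
    let B' : S → K := fun j => ⟨deriv (L j) 1, mem_algebraicClosure_iff.2 j.2⟩
    let φ : (S → K) →ₗ[K] K × K := LinearMap.prod
      (Fintype.linearCombination K A') (Fintype.linearCombination K B')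
    have hk : LinearMap.ker φ ≠ ⊥ := by
      apply LinearMap.ker_ne_bot_of_finrank_lt
      rw [Module.finrank_prod, Module.finrank_self, Module.finrank_fintype_fun_eq_card,
        ← Nat.card_eq_fintype_card, Nat.card_coe_set_eq]
      omega
    obtain ⟨x, hx, hx0⟩ := (Submodule.ne_bot_iff _).1 hk
    obtain ⟨j0, hj0⟩ := Function.ne_iff.1 hx0
    have hx' : φ x = 0 := hx
    have hext : ∀ g : Fin r → ℂ, ∑ j, (if h : j ∈ S then (x ⟨j, h⟩ : ℂ) else 0) * g j =
        ∑ j : S, (x j : ℂ) * g j := by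
      intro g
      rw [← Finset.sum_subset (Finset.subset_univ S.toFinset), ← Finset.sum_coe_sort]
      · refine Fintype.sum_equiv (Equiv.subtypeEquivRight (by simp)) _ _ ?_
        rintro ⟨j, hj⟩
        have hj' : j ∈ S := by simpa using hj
        simp only [hj', dif_pos]
        rfl
      · intro j _ hj
        have hj' : j ∉ S := by simpa using hj
        simp [hj']
    refine ⟨fun j => if h : j ∈ S then (x ⟨j, h⟩ : ℂ) else 0, ?_, ⟨j0, ?_⟩, ?_, ?_⟩
    · intro j
      by_cases h : j ∈ S
      · simp only [h, dif_pos]; exact mem_algebraicClosure_iff.1 (x ⟨j, h⟩).2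
      · simp only [h, dif_neg, not_false_eq_true]; exact isAlgebraic_zero
    · simpa using hj0
    · rw [hext]
      have h1 := congrArg (fun z : K × K => (z.1 : ℂ)) hx'
      simpa [φ, Fintype.linearCombination_apply, A'] using h1
    · rw [hext]
      have h1 := congrArg (fun z : K × K => (z.2 : ℂ)) hx'
      simpa [φ, Fintype.linearCombination_apply, B'] using h1
  -- the combination
  set Φ : ZMod p → ℂ := ∑ j, α j • F j with hΦ
  have hΦx : ∀ x, Φ x = ∑ j, α j * F j x := fun x => by simp [hΦ]
  have hΦodd : Φ.Odd := by
    intro x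
    rw [hΦx, hΦx, ← Finset.sum_neg_distrib]
    exact Finset.sum_congr rfl fun j _ => by rw [hFodd j x]; ring
  have hGx : ∀ x, ZMod.dft Φ x = ∑ j, α j * ZMod.dft (F j) x := fun x => by
    simp [hΦ, map_sum, map_smul]
  have hGodd : (ZMod.dft Φ).Odd := ZMod.dft_odd_iff.2 hΦodd
  have hG0 : ZMod.dft Φ 0 = 0 := by
    have := hGodd 0
    rw [neg_zero] at this
    exact self_eq_neg.1 this
  have hG2 : ∑ a, ZMod.dft Φ a * (a.val : ℂ) = 0 := by
    rw [← hα1]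
    simp_rw [hGx, hA, Finset.sum_mul, Finset.mul_sum]
    rw [Finset.sum_comm]
    simp_rw [mul_assoc]
  have hLΦ : deriv (ZMod.LFunction Φ) 1 = 0 := by
    have e : ZMod.LFunction Φ = fun s => ∑ j, α j * L j s := by
      ext s
      simp_rw [hLF, ZMod.LFunction, hΦx, Finset.sum_mul, Finset.mul_sum]
      rw [Finset.sum_comm]
      refine Finset.sum_congr rfl fun j _ => Finset.sum_congr rfl fun a _ => by ring
    rw [e, ← hα2]
    apply HasDerivAt.deriv
    exact HasDerivAt.fun_sum fun j _ => ((hLdiff j 1).hasDerivAt).const_mul (α j)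
  obtain ⟨h0, hD⟩ := aux_LG (ZMod.dft Φ) hG0 (hodd_sum _ hGodd) hG2
  have hzero := aux_FE Φ hΦodd (hodd_sum _ hΦodd) h0 _ hD hLΦ
  have hc := hconj (fun a => ZMod.dft Φ (a : ZMod p)) (fun a => by
    simp only [hGx]
    exact hsumalg _ _ fun j => (hαalg j).mul (hGalg j _)) (by
    rw [← hzero]
    have hinj : ∀ a ∈ Finset.Icc 1 (p - 1), ((a : ZMod p)).val = a := fun a ha => by
      rw [Finset.mem_Icc] at ha
      exact ZMod.val_cast_of_lt (by omega)
    refine Finset.sum_bij_ne_zero (fun a _ _ => (a : ZMod p)) ?_ ?_ ?_ ?_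
    · intros; exact Finset.mem_univ _
    · intro a ha _ b hb _ hab
      rw [← hinj a ha, ← hinj b hb, hab]
    · intro b _ hb
      have hb0 : b ≠ 0 := by rintro rfl; simp [hG0] at hb
      have hbv : b.val ≠ 0 := by simpa using hb0
      have := ZMod.val_lt b
      refine ⟨b.val, Finset.mem_Icc.2 ⟨by omega, by omega⟩, ?_, by simp⟩
      simpa using hb
    · intro a ha _
      rw [hinj a ha])
  have hG : ZMod.dft Φ = 0 := by
    ext x
    by_cases hx : x = 0
    · rw [hx, hG0]; rfl
    · have hxv : x.val ≠ 0 := by simpa using hx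
      have := ZMod.val_lt x
      have := hc x.val (Finset.mem_Icc.2 ⟨by omega, by omega⟩)
      simpa using this
  have hΦ0 : Φ = 0 := by
    simpa using hG
  obtain ⟨j, hj⟩ := hαne
  refine hj (hindep α hαalg (fun n => ?_) j)
  have := congrFun hΦ0 (n : ZMod p)
  rw [hΦx] at this
  simp_rw [hFf] at this
  exact this
end

section
/- Let p > 7 be a prime, and assume the numbers log Γ(a/p) for 1 ≤ a ≤ p-1 are Q̄-linearly independent. Then at least (p-7)/2 of the numbers γ_1(a,p), 1 ≤ a ≤ p-1, are transcendental, where γ_1(a,p) are the first generalized Stieltjes constants. -/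
open Finset Filter Topology

lemma st_hasDeriv (s : ℂ) {t : ℝ} (ht : 0 < t) :
    HasDerivAt (fun y : ℝ => (y : ℂ) ^ (-s)) (-s * (t : ℂ) ^ (-s - 1)) t := by
  have h : HasDerivAt (fun z : ℂ => z ^ (-s)) (-s * (t : ℂ) ^ (-s - 1)) (t : ℂ) := by
    have := (hasDerivAt_id (t : ℂ)).cpow_const (c := -s) (Or.inl (by simpa using ht))
    simpa using this
  exact h.comp_ofReal

lemma st_bound1 (s : ℂ) (hs : -1 < s.re) {u x y : ℝ} (hu : 0 < u) (hx : u ≤ x) (hy : u ≤ y) :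
    ‖(x : ℂ) ^ (-s) - (y : ℂ) ^ (-s)‖ ≤ ‖s‖ * u ^ (-s.re - 1) * |x - y| := by
  have := Convex.norm_image_sub_le_of_norm_hasDerivWithin_le (𝕜 := ℝ) (s := Set.Ici u)
    (f := fun y : ℝ => (y : ℂ) ^ (-s)) (f' := fun t : ℝ => -s * (t : ℂ) ^ (-s - 1))
    (C := ‖s‖ * u ^ (-s.re - 1)) (x := y) (y := x)
    (fun t ht => (st_hasDeriv s (lt_of_lt_of_le hu ht)).hasDerivWithinAt)
    (fun t ht => by
      have ht0 : 0 < t := lt_of_lt_of_le hu ht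
      rw [norm_mul, norm_neg, Complex.norm_cpow_eq_rpow_re_of_pos ht0]
      simp only [Complex.sub_re, Complex.neg_re, Complex.one_re]
      exact mul_le_mul_of_nonneg_left
        (Real.rpow_le_rpow_of_nonpos hu ht (by linarith)) (norm_nonneg _))
    (convex_Ici u) hy hx
  simpa using this

lemma st_bound2 (s : ℂ) (hs : -2 < s.re) {N x y : ℝ} (hN : 0 < N)
    (hx : x ∈ Set.Icc N (N + 1)) (hy : y ∈ Set.Icc N (N + 1)) :
    ‖(x : ℂ) ^ (-s) - (y : ℂ) ^ (-s) + (x - y) * s * (N : ℂ) ^ (-s - 1)‖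
      ≤ ‖s‖ * (‖s + 1‖ * N ^ (-s.re - 2)) * |x - y| := by
  have := Convex.norm_image_sub_le_of_norm_hasDerivWithin_le (𝕜 := ℝ) (s := Set.Icc N (N + 1))
    (f := fun y : ℝ => (y : ℂ) ^ (-s) + (y : ℂ) * (s * (N : ℂ) ^ (-s - 1)))
    (f' := fun t : ℝ => -s * (t : ℂ) ^ (-s - 1) + 1 * (s * (N : ℂ) ^ (-s - 1)))
    (C := ‖s‖ * (‖s + 1‖ * N ^ (-s.re - 2))) (x := y) (y := x)
    (fun t ht => ((st_hasDeriv s (lt_of_lt_of_le hN ht.1)).add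
      ((Complex.ofRealCLM.hasDerivAt (x := t)).mul_const _)).hasDerivWithinAt)
    (fun t ht => by
      have ht0 : 0 < t := lt_of_lt_of_le hN ht.1
      have e : -s * (t : ℂ) ^ (-s - 1) + 1 * (s * (N : ℂ) ^ (-s - 1)) =
        s * ((N : ℂ) ^ (-(s + 1)) - (t : ℂ) ^ (-(s + 1))) := by
        rw [show -(s + 1) = -s - 1 by ring]; ring
      rw [e, norm_mul]
      refine mul_le_mul_of_nonneg_left ?_ (norm_nonneg _)
      refine (st_bound1 (s + 1) (by simp; linarith) hN le_rfl ht.1).trans ?_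
      have h1 : |N - t| ≤ 1 := by rw [abs_le]; constructor <;> linarith [ht.1, ht.2]
      have h2 : -(s + 1).re - 1 = -s.re - 2 := by simp; ring
      rw [h2]
      have h3 : 0 ≤ ‖s + 1‖ * N ^ (-s.re - 2) := by positivity
      nlinarith)
    (convex_Icc _ _) hy hx
  have e : (x : ℂ) ^ (-s) - (y : ℂ) ^ (-s) + (x - y) * s * (N : ℂ) ^ (-s - 1) =
    (x : ℂ) ^ (-s) + (x : ℂ) * (s * (N : ℂ) ^ (-s - 1)) -
    ((y : ℂ) ^ (-s) + (y : ℂ) * (s * (N : ℂ) ^ (-s - 1))) := by ring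
  rw [e]
  simpa using this

lemma st_zeta_entire : ∃ Z : ℂ → ℂ, Differentiable ℂ Z ∧ Z 0 = 1 ∧
    ∀ s, s ≠ 0 → Z s = s * riemannZeta (s + 1) := by
  refine ⟨Function.update (fun s => s * riemannZeta (s + 1)) 0 1, ?_, by simp, 
    fun s hs => by simp [hs]⟩
  have hd : ∀ s : ℂ, s ≠ 0 → DifferentiableAt ℂ
      (Function.update (fun s => s * riemannZeta (s + 1)) 0 1) s := by
    intro s hs
    have h1 : DifferentiableAt ℂ (fun s => s * riemannZeta (s + 1)) s := by
      refine differentiableAt_id.mul ?_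
      exact (differentiableAt_riemannZeta (s := s + 1) (by simpa using hs)).comp s (by fun_prop)
    refine h1.congr_of_eventuallyEq ?_
    filter_upwards [isOpen_ne.mem_nhds hs] with z hz
    simp [Function.update_of_ne hz]
  intro s
  by_cases hs : s = 0
  · subst hs
    refine (Complex.analyticAt_of_differentiable_on_punctured_nhds_of_continuousAt
      ?_ ?_).differentiableAt
    · filter_upwards [self_mem_nhdsWithin] with z hz using hd z hz
    · rw [continuousAt_update_same]
      have h := riemannZeta_residue_one
      have h2 : Tendsto (fun s : ℂ => s + 1) (𝓝[≠] 0) (𝓝[≠] 1) := by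
        refine tendsto_nhdsWithin_iff.2 ⟨?_, ?_⟩
        · have : Tendsto (fun s : ℂ => s + 1) (𝓝 0) (𝓝 (0 + 1)) :=
            (continuous_id.add continuous_const).tendsto 0
          rw [zero_add] at this
          exact this.mono_left nhdsWithin_le_nhds
        · filter_upwards [self_mem_nhdsWithin] with z hz
          simpa using hz
      simpa [Function.comp_def] using h.comp h2
  · exact hd s hs

lemma st_hurwitz (Z : ℂ → ℂ) (hZ : Differentiable ℂ Z) (hZ0 : Z 0 = 1)
    (hZ1 : ∀ s, s ≠ 0 → Z s = s * riemannZeta (s + 1)) {x : ℝ} (hx0 : 0 < x) (hx1 : x < 1) :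
    HurwitzZeta.hurwitzZetaOdd (x : UnitAddCircle) 0 = 1 / 2 - x ∧
    deriv (HurwitzZeta.hurwitzZetaOdd (x : UnitAddCircle)) 0 =
      ((Real.log (Real.Gamma x) - Real.log (Real.Gamma (1 - x)) : ℝ) : ℂ) / 2 +
      (Real.eulerMascheroniConstant - deriv Z 0) * (x - 1 / 2) := by
  set U : Set ℂ := Metric.ball 1 (3 / 2) with hU
  have hUo : IsOpen U := Metric.isOpen_ball
  have h0U : (0 : ℂ) ∈ U := by simp [hU]; norm_num
  have hUre : ∀ s ∈ U, -1 / 2 < s.re ∧ ‖s‖ ≤ 5 / 2 := by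
    intro s hs
    rw [hU, Metric.mem_ball, dist_eq_norm] at hs
    have h1 := (Complex.abs_re_le_norm (s - 1)).trans_lt hs
    rw [abs_lt] at h1
    simp only [Complex.sub_re, Complex.one_re] at h1
    refine ⟨by linarith [h1.1], ?_⟩
    calc ‖s‖ = ‖(s - 1) + 1‖ := by ring_nf
      _ ≤ ‖s - 1‖ + ‖(1 : ℂ)‖ := norm_add_le _ _
      _ ≤ 5 / 2 := by rw [norm_one]; linarith
  let g : ℕ → ℂ → ℂ := fun n s =>
    ((n + 1 + x : ℝ) : ℂ) ^ (-s) - ((n + 1 + 1 - x : ℝ) : ℂ) ^ (-s)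
      + (2 * x - 1) * s * ((n + 1 : ℝ) : ℂ) ^ (-s - 1)
  have hpow : ∀ t : ℝ, 0 < t → ∀ s : ℂ, HasDerivAt (fun s : ℂ => (t : ℂ) ^ (-s))
      (-((t : ℂ) ^ (-s) * Complex.log t)) s := by
    intro t ht s
    have := ((hasDerivAt_id s).neg).const_cpow (c := (t : ℂ)) (Or.inl (by simpa using ht.ne'))
    simpa using! this
  have hgd : ∀ n, Differentiable ℂ (g n) := by
    intro n s
    have hn : (0 : ℝ) < n + 1 := by positivity
    refine ((hpow _ (by linarith) s).differentiableAt.sub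
      (hpow _ (by linarith) s).differentiableAt).add ?_
    refine DifferentiableAt.mul (by fun_prop) ?_
    exact DifferentiableAt.const_cpow (by fun_prop) (Or.inl (by exact_mod_cast hn.ne'))
  have hu : Summable (fun n : ℕ => (5 / 2 * (7 / 2)) * ((n + 1 : ℕ) : ℝ) ^ (-(3 / 2) : ℝ)) := by
    refine Summable.mul_left _ ?_
    exact (summable_nat_add_iff 1).2 (Real.summable_nat_rpow.2 (by norm_num))
  have hgb : ∀ n, ∀ s ∈ U, ‖g n s‖ ≤ (5 / 2 * (7 / 2)) * ((n + 1 : ℕ) : ℝ) ^ (-(3 / 2) : ℝ) := by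
    intro n s hs
    obtain ⟨h1, h2⟩ := hUre s hs
    have hn : (0 : ℝ) < n + 1 := by positivity
    have hb := st_bound2 s (by linarith) hn (x := n + 1 + x) (y := n + 1 + 1 - x)
      ⟨by linarith, by linarith⟩ ⟨by linarith, by linarith⟩
    have e : g n s = ((n + 1 + x : ℝ) : ℂ) ^ (-s) - ((n + 1 + 1 - x : ℝ) : ℂ) ^ (-s)
      + (((n + 1 + x : ℝ) : ℂ) - ((n + 1 + 1 - x : ℝ) : ℂ)) * s * ((n + 1 : ℝ) : ℂ) ^ (-s - 1) := by
      simp only [g]; push_cast; ring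
    rw [e]
    refine hb.trans ?_
    have h3 : |(n : ℝ) + 1 + x - (n + 1 + 1 - x)| ≤ 1 := by
      rw [abs_le]; constructor <;> linarith
    have h4 : ‖s + 1‖ ≤ 7 / 2 := (norm_add_le _ _).trans (by rw [norm_one]; linarith)
    have h5 : ((n : ℝ) + 1) ^ (-s.re - 2) ≤ ((n + 1 : ℕ) : ℝ) ^ (-(3 / 2) : ℝ) := by
      push_cast
      exact Real.rpow_le_rpow_of_exponent_le (by linarith [(Nat.cast_nonneg n : (0:ℝ) ≤ n)])
        (by linarith)
    calc _ ≤ ‖s‖ * (‖s + 1‖ * ((n : ℝ) + 1) ^ (-s.re - 2)) * 1 :=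
          mul_le_mul_of_nonneg_left h3 (by positivity)
      _ ≤ 5 / 2 * (7 / 2 * ((n + 1 : ℕ) : ℝ) ^ (-(3 / 2) : ℝ)) * 1 := by gcongr
      _ = _ := by ring
  let S : ℂ → ℂ := fun s => ∑' n, g n s
  have hSd : DifferentiableOn ℂ S U :=
    Complex.differentiableOn_tsum_of_summable_norm hu (fun n => (hgd n).differentiableOn) hUo hgb
  have hSder : HasSum (fun n => deriv (g n) 0) (deriv S 0) :=
    Complex.hasSum_deriv_of_summable_norm hu (fun n => (hgd n).differentiableOn) hUo hgb h0U
  let G : ℂ → ℂ := fun s => (((x : ℂ) ^ (-s) - ((1 - x : ℝ) : ℂ) ^ (-s)) + S s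
    - (2 * x - 1) * Z s) / 2
  have hpd : Differentiable ℂ (fun s : ℂ => (x : ℂ) ^ (-s) - ((1 - x : ℝ) : ℂ) ^ (-s)) :=
    fun s => (hpow _ hx0 s).differentiableAt.sub (hpow _ (by linarith) s).differentiableAt
  have hGd : DifferentiableOn ℂ G U := by
    refine DifferentiableOn.div_const (DifferentiableOn.sub (hpd.differentiableOn.add hSd) ?_) _
    exact (hZ.const_mul _).differentiableOn
  have hEq1 : ∀ s : ℂ, 1 < s.re → HurwitzZeta.hurwitzZetaOdd (x : UnitAddCircle) s = G s := by
    intro s hs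
    have hs0 : s ≠ 0 := by rintro rfl; simp at hs; linarith
    have hH := (HurwitzZeta.hasSum_nat_hurwitzZetaOdd_of_mem_Icc ⟨hx0.le, hx1.le⟩ hs).mul_left 2
    have hH' := (hasSum_nat_add_iff' 1).2 hH
    have hz : HasSum (fun n : ℕ => 1 / ((n : ℂ) + 1) ^ (s + 1)) (riemannZeta (s + 1)) := by
      rw [zeta_eq_tsum_one_div_nat_add_one_cpow (by simp; linarith)]
      refine Summable.hasSum ?_
      have := (summable_nat_add_iff 1).2
        (Complex.summable_one_div_nat_cpow (p := s + 1).2 (by simp; linarith))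
      simpa using this
    have hz' := hz.mul_left ((2 * x - 1) * s)
    have hsum := hH'.add hz'
    have hS : S s = _ := HasSum.tsum_eq (f := fun n => g n s) (by
      refine hsum.congr_fun fun n => ?_
      simp only [g]
      rw [Complex.cpow_neg, Complex.cpow_neg, show -s - 1 = -(s + 1) by ring, Complex.cpow_neg]
      push_cast
      simp only [one_div]
      ring)
    simp only [G]
    rw [hS, hZ1 s hs0]
    simp only [Finset.range_one, Finset.sum_singleton, Complex.cpow_neg]
    push_cast
    simp only [one_div, zero_add]
    ring
  have hEq : Set.EqOn (HurwitzZeta.hurwitzZetaOdd (x : UnitAddCircle)) G U := by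
    refine AnalyticOnNhd.eqOn_of_preconnected_of_eventuallyEq (z₀ := 2)
      ((HurwitzZeta.differentiable_hurwitzZetaOdd _).differentiableOn.analyticOnNhd hUo)
      (hGd.analyticOnNhd hUo) (convex_ball _ _).isPreconnected ?_ ?_
    · simp [hU, dist_eq_norm]; norm_num
    · have : {s : ℂ | 1 < s.re} ∈ 𝓝 (2 : ℂ) :=
        (isOpen_lt continuous_const Complex.continuous_re).mem_nhds (by simp)
      filter_upwards [this] with s hs using hEq1 s hs
  have hS0 : S 0 = 0 := by simp [S, g]
  refine ⟨?_, ?_⟩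
  · rw [hEq h0U]
    simp only [G, hS0, hZ0]
    simp
    ring
  · have hEv : HurwitzZeta.hurwitzZetaOdd (x : UnitAddCircle) =ᶠ[𝓝 0] G := by
      filter_upwards [hUo.mem_nhds h0U] with s hs using hEq hs
    rw [hEv.deriv_eq]
    have hgder : ∀ n : ℕ, deriv (g n) 0 = ((Real.log (n + 1 + 1 - x) - Real.log (n + 1 + x)
        + (2 * x - 1) / (n + 1) : ℝ) : ℂ) := by
      intro n
      have hn : (0 : ℝ) < n + 1 := by positivity
      have h1 := hpow (n + 1 + x) (by linarith) 0
      have h2 := hpow (n + 1 + 1 - x) (by linarith) 0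
      have h3 : HasDerivAt (fun s : ℂ => (2 * x - 1) * s) ((2 * x - 1) * 1) (0 : ℂ) :=
        (hasDerivAt_id _).const_mul _
      have h4 : DifferentiableAt ℂ (fun s : ℂ => ((n + 1 : ℝ) : ℂ) ^ (-s - 1)) 0 :=
        DifferentiableAt.const_cpow (by fun_prop) (Or.inl (by exact_mod_cast hn.ne'))
      have h5 := (h1.sub h2).add (h3.mul h4.hasDerivAt)
      refine (h5.deriv.trans ?_)
      rw [← Complex.ofReal_log (by linarith), ← Complex.ofReal_log (by linarith)]
      simp [Complex.cpow_neg_one]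
      ring
    have hlim : Tendsto (fun n : ℕ => ∑ k ∈ range n, (Real.log (k + 1 + 1 - x)
        - Real.log (k + 1 + x) + (2 * x - 1) / (k + 1))) atTop
        (𝓝 (Real.log (Real.Gamma x) - Real.log (Real.Gamma (1 - x)) + Real.log x
          - Real.log (1 - x) + (2 * x - 1) * Real.eulerMascheroniConstant)) := by
      have t1 := Real.BohrMollerup.tendsto_log_gamma hx0
      have t2 := Real.BohrMollerup.tendsto_log_gamma (x := 1 - x) (by linarith)
      have t3 := Real.tendsto_harmonic_sub_log.const_mul (2 * x - 1)
      have t4 := (((t1.sub t2).add_const (Real.log x)).sub_const (Real.log (1 - x))).add t3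
      refine t4.congr fun n => ?_
      simp only [Real.BohrMollerup.logGammaSeq, harmonic]
      rw [Finset.sum_range_succ', Finset.sum_range_succ']
      simp only [Finset.sum_add_distrib, Finset.sum_sub_distrib]
      have e1 : ∀ k : ℕ, x + ((k + 1 : ℕ) : ℝ) = k + 1 + x := by intro k; push_cast; ring
      have e2 : ∀ k : ℕ, 1 - x + ((k + 1 : ℕ) : ℝ) = k + 1 + 1 - x := by
        intro k; push_cast; ring
      simp only [e1, e2]
      push_cast
      simp only [div_eq_mul_inv, ← Finset.mul_sum]
      ring
    have hSval : deriv S 0 = ((Real.log (Real.Gamma x) - Real.log (Real.Gamma (1 - x))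
        + Real.log x - Real.log (1 - x) + (2 * x - 1) * Real.eulerMascheroniConstant : ℝ) : ℂ) := by
      refine tendsto_nhds_unique hSder.tendsto_sum_nat ?_
      refine ((Complex.continuous_ofReal.tendsto _).comp hlim).congr fun n => ?_
      simp only [hgder, Function.comp]
      push_cast
      rfl
    have hSdd : DifferentiableAt ℂ S 0 := hSd.differentiableAt (hUo.mem_nhds h0U)
    have h1 := hpow x hx0 0
    have h2 := hpow (1 - x) (by linarith) 0
    have h3 := ((((h1.sub h2).add hSdd.hasDerivAt).sub
      ((hZ 0).hasDerivAt.const_mul (2 * (x : ℂ) - 1))).div_const 2)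
    refine h3.deriv.trans ?_
    rw [hSval, ← Complex.ofReal_log hx0.le, ← Complex.ofReal_log (by linarith)]
    simp
    ring

noncomputable def stc (p b n : ℕ) : ℝ := Real.sin (2 * Real.pi * ((b : ℝ) / p) * n)

lemma stc_comm (p b n : ℕ) : stc p b n = stc p n b := by
  unfold stc; congr 1; ring

lemma stc_zero (p b : ℕ) : stc p b 0 = 0 := by simp [stc]

lemma stc_add_mul (p : ℕ) (hp : 0 < p) (b k a : ℕ) : stc p b (p * k + a) = stc p b a := by
  unfold stc
  have hp' : (p : ℝ) ≠ 0 := by positivity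
  rw [← Real.sin_add_nat_mul_two_pi (2 * Real.pi * ((b : ℝ) / p) * a) (b * k)]
  congr 1
  push_cast
  field_simp
  ring

lemma stc_mod (p : ℕ) (hp : 0 < p) (b n : ℕ) : stc p b (n % p) = stc p b n := by
  conv_rhs => rw [← Nat.div_add_mod n p]
  rw [stc_add_mul p hp]

lemma stc_refl (p : ℕ) (hp : 0 < p) (b : ℕ) {a : ℕ} (ha : a ≤ p) :
    stc p b (p - a) = - stc p b a := by
  unfold stc
  have hp' : (p : ℝ) ≠ 0 := by positivity
  rw [← Real.sin_neg, ← Real.sin_add_nat_mul_two_pi (-(2 * Real.pi * ((b : ℝ) / p) * a)) b]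
  congr 1
  rw [Nat.cast_sub ha]
  field_simp
  ring

lemma st_sum_Icc {M : Type*} [AddCommMonoid M] (f : ℕ → M) (N : ℕ) :
    ∑ n ∈ Finset.Icc 1 N, f n = ∑ n ∈ range N, f (n + 1) := by
  induction N with
  | zero => simp
  | succ N ih => rw [Finset.sum_Icc_succ_top (by omega), ih, Finset.sum_range_succ]

lemma st_sum_mul {M : Type*} [AddCommMonoid M] (f : ℕ → M) (p K : ℕ) :
    ∑ k ∈ range K, ∑ a ∈ range p, f (p * k + a) = ∑ n ∈ range (p * K), f n := by
  induction K with
  | zero => simp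
  | succ K ih => rw [Finset.sum_range_succ, ih, Nat.mul_succ, Finset.sum_range_add]

lemma st_sum_reflect {M : Type*} [AddCommMonoid M] (f : ℕ → M) (p : ℕ) :
    ∑ a ∈ Finset.Icc 1 (p - 1), f (p - a) = ∑ a ∈ Finset.Icc 1 (p - 1), f a := by
  refine Finset.sum_nbij' (fun a => p - a) (fun a => p - a) ?_ ?_ ?_ ?_ ?_ <;>
    intro a ha <;> simp only [Finset.mem_Icc] at ha ⊢ <;> omega

lemma stc_sum (p : ℕ) (hp : 0 < p) (b : ℕ) : ∑ a ∈ Finset.Icc 1 (p - 1), stc p b a = 0 := by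
  have h := st_sum_reflect (stc p b) p
  have h2 : ∑ a ∈ Finset.Icc 1 (p - 1), stc p b (p - a) =
      ∑ a ∈ Finset.Icc 1 (p - 1), - stc p b a :=
    Finset.sum_congr rfl fun a ha => stc_refl p hp b (by simp at ha; omega)
  rw [h2, Finset.sum_neg_distrib] at h
  linarith

lemma stc_sum' (p : ℕ) (hp : 0 < p) (b : ℕ) : ∑ a ∈ range p, stc p b (a + 1) = 0 := by
  obtain ⟨q, rfl⟩ : ∃ q, p = q + 1 := ⟨p - 1, by omega⟩
  have h := stc_sum (q + 1) hp b
  rw [Nat.add_sub_cancel, st_sum_Icc] at h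
  rw [Finset.sum_range_succ, h]
  have := stc_add_mul (q + 1) hp b 1 0
  rw [stc_zero] at this
  simpa using this

lemma st_regroup (p : ℕ) (hp : 0 < p) (b : ℕ) (v : ℕ → ℝ) (N : ℕ) :
    ∑ a ∈ Finset.Icc 1 (p - 1), stc p b a *
      ∑ n ∈ (Finset.Icc 1 N).filter (fun n => n % p = a % p), v n =
    ∑ n ∈ Finset.Icc 1 N, stc p b n * v n := by
  simp only [Finset.mul_sum, Finset.sum_filter]
  rw [Finset.sum_comm]
  refine Finset.sum_congr rfl fun n _ => ?_
  have hlt := Nat.mod_lt n hp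
  by_cases h0 : n % p = 0
  · rw [← stc_mod p hp b n, h0, stc_zero, zero_mul]
    refine Finset.sum_eq_zero fun a ha => ?_
    rw [Finset.mem_Icc] at ha
    rw [if_neg, mul_zero]
    rw [Nat.mod_eq_of_lt (by omega)]; omega
  · rw [Finset.sum_eq_single (n % p)]
    · rw [if_pos (by simp), stc_mod p hp]
    · intro a ha hne
      rw [Finset.mem_Icc] at ha
      rw [if_neg, mul_zero]
      rw [Nat.mod_eq_of_lt (a := a) (by omega)]
      exact fun h => hne h.symm
    · intro h
      exact absurd (Finset.mem_Icc.2 ⟨by omega, by omega⟩) h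

lemma st_sin (p : ℕ) (hp : 0 < p) (b : ℕ) (γ : ℕ → ℝ)
    (hγ : ∀ a ∈ Finset.Icc 1 (p - 1), Tendsto (fun x : ℝ =>
      (∑ n ∈ (Finset.Icc 1 ⌊x⌋₊).filter (fun n => n % p = a % p),
        Real.log n / n) - (Real.log x) ^ 2 / (2 * p)) atTop (𝓝 (γ a))) :
    deriv (HurwitzZeta.sinZeta (((b : ℝ) / p : ℝ) : UnitAddCircle)) 1 =
      ((- ∑ a ∈ Finset.Icc 1 (p - 1), stc p b a * γ a : ℝ) : ℂ) := by
  set U : Set ℂ := Metric.ball 1 (1 / 2) with hU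
  have hUo : IsOpen U := Metric.isOpen_ball
  have h1U : (1 : ℂ) ∈ U := by simp [hU]
  have hUre : ∀ s ∈ U, 1 / 2 < s.re ∧ ‖s‖ ≤ 3 / 2 := by
    intro s hs
    rw [hU, Metric.mem_ball, dist_eq_norm] at hs
    have h1 := (Complex.abs_re_le_norm (s - 1)).trans_lt hs
    rw [abs_lt] at h1
    simp only [Complex.sub_re, Complex.one_re] at h1
    refine ⟨by linarith [h1.1], ?_⟩
    calc ‖s‖ = ‖(s - 1) + 1‖ := by ring_nf
      _ ≤ ‖s - 1‖ + ‖(1 : ℂ)‖ := norm_add_le _ _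
      _ ≤ 3 / 2 := by rw [norm_one]; linarith
  let f : ℕ → ℂ → ℂ := fun n s => (stc p b (n + 1) : ℂ) * ((n + 1 : ℝ) : ℂ) ^ (-s)
  have hfd : ∀ n s, HasDerivAt (f n)
      (-((stc p b (n + 1) : ℂ) * (((n + 1 : ℝ) : ℂ) ^ (-s) * Complex.log ((n + 1 : ℝ) : ℂ)))) s := by
    intro n s
    have hn : (0 : ℝ) < n + 1 := by positivity
    have := (((hasDerivAt_id s).neg).const_cpow (c := ((n + 1 : ℝ) : ℂ))
      (Or.inl (by exact_mod_cast hn.ne'))).const_mul (stc p b (n + 1) : ℂ)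
    refine this.congr_deriv ?_
    simp
  let g : ℕ → ℂ → ℂ := fun k s => ∑ a ∈ range p, f (p * k + a) s
  have hgd' : ∀ k s, HasDerivAt (g k) (∑ a ∈ range p, deriv (f (p * k + a)) s) s := by
    intro k s
    exact HasDerivAt.fun_sum fun a _ => (hfd _ s).differentiableAt.hasDerivAt
  have hgd : ∀ k, Differentiable ℂ (g k) := fun k s => (hgd' k s).differentiableAt
  have hu : Summable (fun n : ℕ => (p * (3 / 2 * p)) * ((n + 1 : ℕ) : ℝ) ^ (-(3 / 2) : ℝ)) := by
    refine Summable.mul_left _ ?_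
    exact (summable_nat_add_iff 1).2 (Real.summable_nat_rpow.2 (by norm_num))
  have hp1 : (1 : ℝ) ≤ p := by exact_mod_cast hp
  have hgb : ∀ k, ∀ s ∈ U, ‖g k s‖ ≤ (p * (3 / 2 * p)) * ((k + 1 : ℕ) : ℝ) ^ (-(3 / 2) : ℝ) := by
    intro k s hs
    obtain ⟨h1, h2⟩ := hUre s hs
    have hk : (0 : ℝ) ≤ k := by positivity
    have hpk : (k : ℝ) ≤ p * k := by nlinarith
    have e : g k s = ∑ a ∈ range p, (stc p b (a + 1) : ℂ) *
        ((((p * k + 1 : ℝ) + a : ℝ) : ℂ) ^ (-s) - ((p * k + 1 : ℝ) : ℂ) ^ (-s)) := by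
      simp only [g, f, mul_sub, Finset.sum_sub_distrib, ← Finset.sum_mul]
      rw [← Complex.ofReal_sum, stc_sum' p hp b, Complex.ofReal_zero, zero_mul, sub_zero]
      refine Finset.sum_congr rfl fun a _ => ?_
      rw [add_assoc, stc_add_mul p hp]
      congr 3
      push_cast; ring
    rw [e]
    have hterm : ∀ a ∈ range p, ‖(stc p b (a + 1) : ℂ) *
        ((((p * k + 1 : ℝ) + a : ℝ) : ℂ) ^ (-s) - ((p * k + 1 : ℝ) : ℂ) ^ (-s))‖ ≤
        (3 / 2 * p) * ((k + 1 : ℕ) : ℝ) ^ (-(3 / 2) : ℝ) := by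
      intro a ha
      have hap : (a : ℝ) ≤ p := by exact_mod_cast (Finset.mem_range.1 ha).le
      have hb := st_bound1 s (by linarith) (u := p * k + 1) (x := (p * k + 1) + a)
        (y := p * k + 1) (by positivity) (by simp) le_rfl
      have hs1 : ‖(stc p b (a + 1) : ℂ)‖ ≤ 1 := by
        rw [Complex.norm_real]; exact Real.abs_sin_le_one _
      have hr : ((p : ℝ) * k + 1) ^ (-s.re - 1) ≤ ((k + 1 : ℕ) : ℝ) ^ (-(3 / 2) : ℝ) := by
        push_cast
        calc ((p : ℝ) * k + 1) ^ (-s.re - 1) ≤ ((p : ℝ) * k + 1) ^ (-(3 / 2) : ℝ) :=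
              Real.rpow_le_rpow_of_exponent_le (by linarith) (by linarith)
          _ ≤ _ := Real.rpow_le_rpow_of_nonpos (by linarith) (by linarith) (by norm_num)
      have ha' : |(p : ℝ) * k + 1 + a - (p * k + 1)| ≤ p := by
        rw [add_sub_cancel_left, abs_of_nonneg (by positivity)]; exact hap
      rw [norm_mul]
      calc _ ≤ 1 * (‖s‖ * ((p : ℝ) * k + 1) ^ (-s.re - 1) * |(p : ℝ) * k + 1 + a - (p * k + 1)|) :=
            mul_le_mul hs1 hb (norm_nonneg _) zero_le_one
        _ ≤ 1 * (3 / 2 * ((k + 1 : ℕ) : ℝ) ^ (-(3 / 2) : ℝ) * p) := by gcongr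
        _ = _ := by ring
    refine (norm_sum_le_of_le _ hterm).trans (le_of_eq ?_)
    rw [Finset.sum_const, Finset.card_range, nsmul_eq_mul]; ring
  let S : ℂ → ℂ := fun s => ∑' n, g n s
  have hSd : DifferentiableOn ℂ S U :=
    Complex.differentiableOn_tsum_of_summable_norm hu (fun n => (hgd n).differentiableOn) hUo hgb
  have hSder : HasSum (fun n => deriv (g n) 1) (deriv S 1) :=
    Complex.hasSum_deriv_of_summable_norm hu (fun n => (hgd n).differentiableOn) hUo hgb h1U
  have htop : Tendsto (fun K : ℕ => p * K) atTop atTop :=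
    tendsto_id.const_mul_atTop' hp
  have hEq1 : ∀ s ∈ U, 1 < s.re →
      HurwitzZeta.sinZeta (((b : ℝ) / p : ℝ) : UnitAddCircle) s = S s := by
    intro s hsU hs
    have hH := HurwitzZeta.hasSum_nat_sinZeta ((b : ℝ) / p) hs
    have hH' := (hasSum_nat_add_iff' 1).2 hH
    simp only [Finset.range_one, Finset.sum_singleton, Nat.cast_zero, mul_zero, Real.sin_zero,
      Complex.ofReal_zero, zero_div, sub_zero] at hH'
    have hf : HasSum (fun n => f n s)
        (HurwitzZeta.sinZeta (((b : ℝ) / p : ℝ) : UnitAddCircle) s) := by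
      refine hH'.congr_fun fun n => ?_
      simp only [f, stc, Complex.cpow_neg]
      push_cast
      rw [div_eq_mul_inv _ (((n : ℂ) + 1) ^ s)]
    have hg : Summable (fun k => g k s) := Summable.of_norm_bounded hu fun k => hgb k s hsU
    refine tendsto_nhds_unique (hf.tendsto_sum_nat.comp htop)
      (hg.hasSum.tendsto_sum_nat.congr fun K => ?_)
    exact st_sum_mul (fun n => f n s) p K
  have hEq : Set.EqOn (HurwitzZeta.sinZeta (((b : ℝ) / p : ℝ) : UnitAddCircle)) S U := by
    have h54 : (5 / 4 : ℂ) ∈ U := by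
      rw [hU, Metric.mem_ball, dist_eq_norm]; norm_num
    refine AnalyticOnNhd.eqOn_of_preconnected_of_eventuallyEq (z₀ := 5 / 4)
      ((HurwitzZeta.differentiableAt_sinZeta _).differentiableOn.analyticOnNhd hUo)
      (hSd.analyticOnNhd hUo) (convex_ball _ _).isPreconnected h54 ?_
    have : {s : ℂ | 1 < s.re} ∈ 𝓝 (5 / 4 : ℂ) :=
      (isOpen_lt continuous_const Complex.continuous_re).mem_nhds (by
        simp; norm_num)
    filter_upwards [this, hUo.mem_nhds h54] with s hs hs2 using hEq1 s hs2 hs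
  have hEv : HurwitzZeta.sinZeta (((b : ℝ) / p : ℝ) : UnitAddCircle) =ᶠ[𝓝 1] S := by
    filter_upwards [hUo.mem_nhds h1U] with s hs using hEq hs
  rw [hEv.deriv_eq]
  have hfder : ∀ n : ℕ, deriv (f n) 1 =
      ((-(stc p b (n + 1) * (Real.log ((n + 1 : ℕ) : ℝ) / ((n + 1 : ℕ) : ℝ))) : ℝ) : ℂ) := by
    intro n
    have hn : (0 : ℝ) ≤ n + 1 := by positivity
    rw [(hfd n 1).deriv, ← Complex.ofReal_log hn, Complex.cpow_neg_one]
    push_cast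
    ring
  have hlim : Tendsto (fun K : ℕ => ∑ n ∈ range (p * K),
      -(stc p b (n + 1) * (Real.log ((n + 1 : ℕ) : ℝ) / ((n + 1 : ℕ) : ℝ)))) atTop
      (𝓝 (- ∑ a ∈ Finset.Icc 1 (p - 1), stc p b a * γ a)) := by
    have t0 : Tendsto (fun K : ℕ => ((p * K : ℕ) : ℝ)) atTop atTop :=
      tendsto_natCast_atTop_atTop.comp htop
    have t1 := tendsto_finsetSum (Finset.Icc 1 (p - 1)) fun a ha =>
      ((hγ a ha).comp t0).const_mul (stc p b a)
    refine t1.neg.congr fun K => ?_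
    simp only [Function.comp, mul_sub, Finset.sum_sub_distrib, Nat.floor_natCast]
    rw [← Finset.sum_mul, stc_sum p hp b, zero_mul, sub_zero, st_regroup p hp b
      (fun n => Real.log n / n), st_sum_Icc, Finset.sum_neg_distrib]
  refine tendsto_nhds_unique hSder.tendsto_sum_nat ?_
  refine ((Complex.continuous_ofReal.tendsto _).comp hlim).congr fun K => ?_
  simp only [Function.comp]
  rw [Complex.ofReal_sum]
  simp only [← hfder]
  rw [← st_sum_mul]
  refine Finset.sum_congr rfl fun k _ => ?_
  rw [(hgd' k 1).deriv]

lemma st_kummer (p : ℕ) (hp : 0 < p) (γ : ℕ → ℝ)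
    (hγ : ∀ a ∈ Finset.Icc 1 (p - 1), Tendsto (fun x : ℝ =>
      (∑ n ∈ (Finset.Icc 1 ⌊x⌋₊).filter (fun n => n % p = a % p),
        Real.log n / n) - (Real.log x) ^ 2 / (2 * p)) atTop (𝓝 (γ a))) :
    ∃ C : ℝ, ∀ b ∈ Finset.Icc 1 (p - 1), ∑ a ∈ Finset.Icc 1 (p - 1), stc p b a * γ a =
      Real.pi / 2 * (Real.log (Real.Gamma ((b : ℝ) / p)) -
        Real.log (Real.Gamma (((p - b : ℕ) : ℝ) / p))) + C * ((b : ℝ) / p - 1 / 2) := by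
  obtain ⟨Z, hZ, hZ0, hZ1⟩ := st_zeta_entire
  let φ : ℂ → ℂ := fun s => 2 * (2 * Real.pi) ^ (-s) * Complex.Gamma s *
    Complex.sin (Real.pi * s / 2)
  have hπ : (Real.pi : ℂ) ≠ 0 := by exact_mod_cast Real.pi_ne_zero
  have hφd : DifferentiableAt ℂ φ 1 := by
    have h1 : DifferentiableAt ℂ (fun s : ℂ => (2 * (Real.pi : ℂ)) ^ (-s)) 1 :=
      DifferentiableAt.const_cpow (by fun_prop) (Or.inl (by simp [hπ]))
    have h2 : DifferentiableAt ℂ Complex.Gamma 1 :=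
      Complex.differentiableAt_Gamma 1 (by
        intro m h
        have := congrArg Complex.re h
        simp at this
        linarith [(Nat.cast_nonneg m : (0:ℝ) ≤ m)])
    have h3 : DifferentiableAt ℂ (fun s : ℂ => Complex.sin (Real.pi * s / 2)) 1 := by fun_prop
    exact ((h1.const_mul 2).mul h2).mul h3
  have hφ1 : φ 1 = 1 / Real.pi := by
    simp only [φ, Complex.cpow_neg_one, Complex.Gamma_one, mul_one, Complex.sin_pi_div_two]
    field_simp
  refine ⟨(Real.pi * (Real.eulerMascheroniConstant - deriv Z 0)
    - Real.pi ^ 2 * deriv φ 1 : ℂ).re, fun b hb => ?_⟩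
  rw [Finset.mem_Icc] at hb
  have hp' : (0 : ℝ) < p := by exact_mod_cast hp
  have hb0 : (0 : ℝ) < b := by exact_mod_cast hb.1
  have hbp : (b : ℝ) < p := by exact_mod_cast (show b < p by omega)
  have hxx : ((p - b : ℕ) : ℝ) / p = 1 - (b : ℝ) / p := by
    rw [Nat.cast_sub (by omega)]; field_simp
  rw [hxx]
  set x : ℝ := (b : ℝ) / p with hx
  have hx0 : 0 < x := by positivity
  have hx1 : x < 1 := by rw [hx, div_lt_one hp']; exact hbp
  obtain ⟨hv, hd⟩ := st_hurwitz Z hZ hZ0 hZ1 hx0 hx1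
  have hs := st_sin p hp b γ hγ
  rw [← hx] at hs
  have hfe : ∀ s : ℂ, 0 < s.re → HurwitzZeta.hurwitzZetaOdd (x : UnitAddCircle) (1 - s) =
      φ s * HurwitzZeta.sinZeta (x : UnitAddCircle) s := by
    intro s hs
    refine HurwitzZeta.hurwitzZetaOdd_one_sub _ fun n h => ?_
    rw [h] at hs
    simp at hs
    linarith [(Nat.cast_nonneg n : (0:ℝ) ≤ n)]
  have hs1 : HurwitzZeta.sinZeta (x : UnitAddCircle) 1 = Real.pi * (1 / 2 - x) := by
    have := hfe 1 (by simp)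
    rw [sub_self, hv, hφ1] at this
    rw [this]; field_simp
  have hev : (fun s => HurwitzZeta.hurwitzZetaOdd (x : UnitAddCircle) (1 - s)) =ᶠ[𝓝 1]
      fun s => φ s * HurwitzZeta.sinZeta (x : UnitAddCircle) s := by
    have : {s : ℂ | 0 < s.re} ∈ 𝓝 (1 : ℂ) :=
      (isOpen_lt continuous_const Complex.continuous_re).mem_nhds (by simp)
    filter_upwards [this] with s hs using hfe s hs
  have hder := hev.deriv_eq
  have hL : deriv (fun s => HurwitzZeta.hurwitzZetaOdd (x : UnitAddCircle) (1 - s)) 1 =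
      - deriv (HurwitzZeta.hurwitzZetaOdd (x : UnitAddCircle)) 0 := by
    rw [deriv_comp_const_sub, sub_self]
  have hR : deriv (fun s => φ s * HurwitzZeta.sinZeta (x : UnitAddCircle) s) 1 =
      deriv φ 1 * HurwitzZeta.sinZeta (x : UnitAddCircle) 1 +
      φ 1 * deriv (HurwitzZeta.sinZeta (x : UnitAddCircle)) 1 :=
    (hφd.hasDerivAt.mul (HurwitzZeta.differentiableAt_sinZeta _ 1).hasDerivAt).deriv
  rw [hL, hR, hd, hs1, hs, hφ1] at hder
  have key : ((∑ a ∈ Finset.Icc 1 (p - 1), stc p b a * γ a : ℝ) : ℂ) =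
      ((Real.pi / 2 * (Real.log (Real.Gamma x) - Real.log (Real.Gamma (1 - x))) : ℝ) : ℂ) +
      (Real.pi * (Real.eulerMascheroniConstant - deriv Z 0) - Real.pi ^ 2 * deriv φ 1) *
      ((x - 1 / 2 : ℝ) : ℂ) := by
    rw [Complex.ofReal_neg] at hder
    have h2 := congrArg (fun z => (Real.pi : ℂ) * z) hder
    simp only [mul_add, one_div] at h2
    rw [mul_inv_cancel_left₀ hπ] at h2
    push_cast at h2 ⊢
    linear_combination h2
  have := congrArg Complex.re key
  rw [Complex.add_re, Complex.re_mul_ofReal, Complex.ofReal_re, Complex.ofReal_re] at this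
  exact this

lemma st_cos_sum (p : ℕ) (hp : 0 < p) (m : ℤ) :
    ∑ b ∈ range p, Real.cos (2 * Real.pi * m / p * b) = if (p : ℤ) ∣ m then (p : ℝ) else 0 := by
  have hp' : (p : ℂ) ≠ 0 := by exact_mod_cast hp.ne'
  have hpr : (p : ℝ) ≠ 0 := by exact_mod_cast hp.ne'
  set ζ : ℂ := Complex.exp ((2 * Real.pi * m / p : ℝ) * Complex.I) with hζ
  have hre : ∑ b ∈ range p, Real.cos (2 * Real.pi * m / p * b) = (∑ b ∈ range p, ζ ^ b).re := by
    rw [Complex.re_sum]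
    refine Finset.sum_congr rfl fun b _ => ?_
    rw [hζ, ← Complex.exp_nat_mul, ← Complex.exp_ofReal_mul_I_re]
    congr 2
    push_cast; ring
  rw [hre]
  split_ifs with h
  · have h1 : ζ = 1 := by
      obtain ⟨k, hk⟩ := h
      rw [hζ, Complex.exp_eq_one_iff]
      refine ⟨k, ?_⟩
      rw [hk]; push_cast; field_simp
    simp [h1]
  · have h1 : ζ ≠ 1 := by
      intro h1
      rw [hζ, Complex.exp_eq_one_iff] at h1
      obtain ⟨k, hk⟩ := h1
      apply h
      refine ⟨k, ?_⟩
      push_cast at hk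
      have h2 : (2 * Real.pi * Complex.I : ℂ) ≠ 0 := Complex.two_pi_I_ne_zero
      have h3 : (m : ℂ) / p = k := by
        apply mul_right_cancel₀ h2
        rw [← hk]; ring
      rw [div_eq_iff hp'] at h3
      have h4 : m = k * p := by exact_mod_cast h3
      rw [h4]; ring
    have h2 : ζ ^ p = 1 := by
      rw [hζ, ← Complex.exp_nat_mul, Complex.exp_eq_one_iff]
      refine ⟨m, ?_⟩
      push_cast; field_simp
    rw [geom_sum_eq h1, h2]; simp

lemma st_orth (p : ℕ) (hp : 0 < p) {a a' : ℕ} (ha : 1 ≤ a) (ha2 : 2 * a < p)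
    (ha' : a' ∈ Finset.Icc 1 (p - 1)) :
    ∑ b ∈ Finset.Icc 1 (p - 1), stc p b a * stc p b a' =
      (if a' = a then (p : ℝ) / 2 else 0) - (if a' = p - a then (p : ℝ) / 2 else 0) := by
  rw [Finset.mem_Icc] at ha'
  have h0 : ∑ b ∈ Finset.Icc 1 (p - 1), stc p b a * stc p b a' =
      ∑ b ∈ range p, stc p b a * stc p b a' := by
    obtain ⟨q, rfl⟩ : ∃ q, p = q + 1 := ⟨p - 1, by omega⟩
    rw [Nat.add_sub_cancel, st_sum_Icc, Finset.sum_range_succ']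
    simp [stc]
  have h1 : ∀ b : ℕ, stc p b a * stc p b a' =
      (Real.cos (2 * Real.pi * ((a - a' : ℤ) : ℝ) / p * b) -
        Real.cos (2 * Real.pi * ((a + a' : ℤ) : ℝ) / p * b)) / 2 := by
    intro b
    have e1 : 2 * Real.pi * ((a - a' : ℤ) : ℝ) / p * b =
      2 * Real.pi * ((b : ℝ) / p) * a - 2 * Real.pi * ((b : ℝ) / p) * a' := by push_cast; ring
    have e2 : 2 * Real.pi * ((a + a' : ℤ) : ℝ) / p * b =
      2 * Real.pi * ((b : ℝ) / p) * a + 2 * Real.pi * ((b : ℝ) / p) * a' := by push_cast; ring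
    rw [e1, e2, Real.cos_sub, Real.cos_add]
    unfold stc; ring
  rw [h0]
  simp only [h1]
  rw [← Finset.sum_div, Finset.sum_sub_distrib, st_cos_sum p hp, st_cos_sum p hp]
  have d1 : ((p : ℤ) ∣ (a - a' : ℤ)) ↔ a' = a := by
    constructor
    · intro h
      have := Int.eq_zero_of_abs_lt_dvd h (by rw [abs_lt]; omega)
      omega
    · rintro rfl; simp
  have d2 : ((p : ℤ) ∣ (a + a' : ℤ)) ↔ a' = p - a := by
    constructor
    · intro h
      have h2 : (p : ℤ) ∣ (a + a' - p : ℤ) := dvd_sub_self_right.2 h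
      have := Int.eq_zero_of_abs_lt_dvd h2 (by rw [abs_lt]; omega)
      omega
    · intro h
      refine ⟨1, by omega⟩
  simp only [d1, d2]
  rw [sub_div]
  split_ifs <;> simp

lemma st_stc_alg (p b a : ℕ) : IsAlgebraic ℚ (stc p b a) := by
  have h := Real.isAlgebraic_sin_rat_mul_pi (2 * ((b : ℚ) / p) * a)
  have h2 : stc p b a = Real.sin (((2 * ((b : ℚ) / p) * a : ℚ) : ℝ) * Real.pi) := by
    unfold stc; congr 1; push_cast; ring
  rw [h2]
  exact h.extendScalars (algebraMap ℤ ℚ).injective_int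

lemma st_alg_sum {A : Finset ℕ} {f : ℕ → ℝ} (h : ∀ a ∈ A, IsAlgebraic ℚ (f a)) :
    IsAlgebraic ℚ (∑ a ∈ A, f a) :=
  (mem_algebraicClosure_iff).1 (sum_mem (S := algebraicClosure ℚ ℝ)
    fun a ha => (mem_algebraicClosure_iff).2 (h a ha))

lemma st_linalg (A : Finset ℕ) (hA : 2 < A.card) (u v : ℕ → ℝ)
    (hu : ∀ a ∈ A, IsAlgebraic ℚ (u a)) (hv : ∀ a ∈ A, IsAlgebraic ℚ (v a)) :
    ∃ x : ℕ → ℝ, (∀ a, IsAlgebraic ℚ (x a)) ∧ (∃ a ∈ A, x a ≠ 0) ∧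
      ∑ a ∈ A, x a * u a = 0 ∧ ∑ a ∈ A, x a * v a = 0 := by
  let K := algebraicClosure ℚ ℝ
  let u' : A → K := fun a => ⟨u a, (mem_algebraicClosure_iff).2 (hu a a.2)⟩
  let v' : A → K := fun a => ⟨v a, (mem_algebraicClosure_iff).2 (hv a a.2)⟩
  let M : Matrix (Fin 2) A K := ![u', v']
  have hker : LinearMap.ker M.mulVecLin ≠ ⊥ := by
    apply LinearMap.ker_ne_bot_of_finrank_lt
    simpa using hA
  obtain ⟨y, hy, hy0⟩ := (Submodule.ne_bot_iff _).1 hker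
  rw [LinearMap.mem_ker, Matrix.mulVecLin_apply] at hy
  have hsum : ∀ w : ℕ → ℝ, ∑ a ∈ A, (if h : a ∈ A then ((y ⟨a, h⟩ : K) : ℝ) else 0) * w a =
      ∑ a : A, ((y a : K) : ℝ) * w a := by
    intro w
    rw [← Finset.sum_coe_sort A]
    refine Finset.sum_congr rfl fun a _ => ?_
    rw [dif_pos a.2]
  refine ⟨fun a => if h : a ∈ A then ((y ⟨a, h⟩ : K) : ℝ) else 0, ?_, ?_, ?_, ?_⟩
  · intro a
    by_cases h : a ∈ A
    · simp only [h, dif_pos]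
      exact (mem_algebraicClosure_iff).1 (y ⟨a, h⟩).2
    · simp only [h, dif_neg, not_false_eq_true]
      exact isAlgebraic_zero
  · by_contra! hcon
    apply hy0
    funext a
    have := hcon a a.2
    rw [dif_pos a.2] at this
    exact Subtype.ext this
  · rw [hsum]
    have := congrArg (fun z : K => (z : ℝ)) (congrFun hy 0)
    simp only [Matrix.mulVec, dotProduct, M, u'] at this
    simpa [mul_comm] using this
  · rw [hsum]
    have := congrArg (fun z : K => (z : ℝ)) (congrFun hy 1)
    simp only [Matrix.mulVec, dotProduct, M, v'] at this
    simpa [mul_comm] using this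

/-- Corollary 2: for a prime `p > 7`, assuming Q̄-linear independence of
`{log Γ(a/p) : 1 ≤ a ≤ p-1}`, at least `(p-7)/2` of the generalized Stieltjes
constants `γ_1(a,p)`, `1 ≤ a ≤ p-1`, are transcendental. -/
theorem stieltjes_transcendental (p : ℕ) (hp : p.Prime) (hp7 : 7 < p)
    (hconj : ∀ c : ℕ → ℂ, (∀ a, IsAlgebraic ℚ (c a)) →
      (∑ a ∈ Finset.Icc 1 (p - 1),
        c a * (Real.log (Real.Gamma ((a : ℝ) / p)) : ℂ)) = 0 →
      ∀ a ∈ Finset.Icc 1 (p - 1), c a = 0)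
    (γ : ℕ → ℝ)
    (hγ : ∀ a ∈ Finset.Icc 1 (p - 1), Tendsto (fun x : ℝ =>
      (∑ n ∈ (Finset.Icc 1 ⌊x⌋₊).filter (fun n => n % p = a % p),
        Real.log n / n) - (Real.log x) ^ 2 / (2 * p)) atTop (𝓝 (γ a))) :
    (p - 7) / 2 ≤ {a : ℕ | a ∈ Finset.Icc 1 (p - 1) ∧ Transcendental ℚ (γ a)}.ncard := by
  classical
  by_contra! hlt
  have hp0 : 0 < p := hp.pos
  have hodd : p % 2 = 1 := Nat.odd_iff.1 (hp.odd_of_ne_two (by omega))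
  set T := {a : ℕ | a ∈ Finset.Icc 1 (p - 1) ∧ Transcendental ℚ (γ a)} with hT
  have hTfin : T.Finite := (Finset.finite_toSet (Finset.Icc 1 (p - 1))).subset fun a ha => ha.1
  set I := Finset.Icc 1 ((p - 1) / 2) with hI
  set A := I.filter (fun a => IsAlgebraic ℚ (γ a) ∧ IsAlgebraic ℚ (γ (p - a))) with hA
  have hBle : (I.filter (fun a => ¬ (IsAlgebraic ℚ (γ a) ∧ IsAlgebraic ℚ (γ (p - a))))).card
      ≤ T.ncard := by
    rw [← Set.ncard_coe_finset]
    refine Set.ncard_le_ncard_of_injOn (fun a => if IsAlgebraic ℚ (γ a) then p - a else a)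
      ?_ ?_ hTfin
    · intro a ha
      simp only [hI, Finset.coe_filter, Finset.mem_Icc, Set.mem_ofPred_eq, not_and] at ha
      simp only [hT, Set.mem_ofPred_eq, Finset.mem_Icc]
      split_ifs with h
      · exact ⟨by omega, ha.2 h⟩
      · exact ⟨by omega, h⟩
    · intro a ha b hb hab
      simp only [hI, Finset.coe_filter, Finset.mem_Icc, Set.mem_ofPred_eq] at ha hb
      simp only at hab
      split_ifs at hab <;> omega
  have hcard := Finset.card_filter_add_card_filter_not (s := I)
    (fun a => IsAlgebraic ℚ (γ a) ∧ IsAlgebraic ℚ (γ (p - a)))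
  have hIc : I.card = (p - 1) / 2 := by simp [hI]
  rw [hIc, ← hA] at hcard
  have hA3 : 2 < A.card := by omega
  have hAmem : ∀ a ∈ A, 1 ≤ a ∧ 2 * a < p ∧ IsAlgebraic ℚ (γ a) ∧ IsAlgebraic ℚ (γ (p - a)) := by
    intro a ha
    simp only [hA, hI, Finset.mem_filter, Finset.mem_Icc] at ha
    exact ⟨ha.1.1, by omega, ha.2.1, ha.2.2⟩
  obtain ⟨x, hxalg, ⟨j, hjA, hj0⟩, hx1, hx2⟩ := st_linalg A hA3 (fun a => γ a - γ (p - a))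
    (fun a => ∑ b ∈ Finset.Icc 1 (p - 1), stc p b a * b)
    (fun a ha => (hAmem a ha).2.2.1.sub (hAmem a ha).2.2.2)
    (fun a _ => st_alg_sum fun b _ => (st_stc_alg p b a).mul (isAlgebraic_natCast b))
  set y : ℕ → ℝ := fun b => ∑ a ∈ A, x a * stc p b a with hy
  have hyalg : ∀ b, IsAlgebraic ℚ (y b) := fun b =>
    st_alg_sum fun a _ => (hxalg a).mul (st_stc_alg p b a)
  have hyorth : ∀ a' ∈ Finset.Icc 1 (p - 1), ∑ b ∈ Finset.Icc 1 (p - 1), y b * stc p b a' =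
      ∑ a ∈ A, x a * ((if a' = a then (p : ℝ) / 2 else 0) -
        (if a' = p - a then (p : ℝ) / 2 else 0)) := by
    intro a' ha'
    simp only [hy, Finset.sum_mul]
    rw [Finset.sum_comm]
    refine Finset.sum_congr rfl fun a ha => ?_
    rw [← st_orth p hp0 (hAmem a ha).1 (hAmem a ha).2.1 ha', Finset.mul_sum]
    exact Finset.sum_congr rfl fun b _ => by ring
  have hyrefl : ∀ b ∈ Finset.Icc 1 (p - 1), y (p - b) = - y b := by
    intro b hb
    rw [Finset.mem_Icc] at hb
    simp only [hy, ← Finset.sum_neg_distrib]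
    refine Finset.sum_congr rfl fun a _ => ?_
    rw [stc_comm, stc_refl p hp0 a (by omega), stc_comm]; ring
  have hyb : ∑ b ∈ Finset.Icc 1 (p - 1), y b * b = 0 := by
    rw [← hx2]
    simp only [hy, Finset.sum_mul, Finset.mul_sum]
    rw [Finset.sum_comm]
    exact Finset.sum_congr rfl fun a _ => Finset.sum_congr rfl fun b _ => by ring
  have hyodd : ∀ w : ℕ → ℝ, ∑ b ∈ Finset.Icc 1 (p - 1), y b * w (p - b) =
      - ∑ b ∈ Finset.Icc 1 (p - 1), y b * w b := by
    intro w
    rw [← st_sum_reflect (fun b => y b * w b), ← Finset.sum_neg_distrib]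
    refine Finset.sum_congr rfl fun b hb => ?_
    rw [hyrefl b hb]; ring
  have hy1 : ∑ b ∈ Finset.Icc 1 (p - 1), y b = 0 := by
    have := hyodd (fun _ => 1)
    simp only [mul_one] at this
    linarith
  obtain ⟨C, hC⟩ := st_kummer p hp0 γ hγ
  -- pairing of `y` with the Kummer identity
  have hpair : ∑ b ∈ Finset.Icc 1 (p - 1), y b * ∑ a ∈ Finset.Icc 1 (p - 1), stc p b a * γ a
      = 0 := by
    have e1 : ∑ b ∈ Finset.Icc 1 (p - 1), y b * ∑ a ∈ Finset.Icc 1 (p - 1), stc p b a * γ a =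
        ∑ a' ∈ Finset.Icc 1 (p - 1),
          (∑ b ∈ Finset.Icc 1 (p - 1), y b * stc p b a') * γ a' := by
      simp only [Finset.mul_sum, Finset.sum_mul]
      rw [Finset.sum_comm]
      exact Finset.sum_congr rfl fun a _ => Finset.sum_congr rfl fun b _ => by ring
    rw [e1, Finset.sum_congr rfl fun a' ha' => by rw [hyorth a' ha']]
    simp only [Finset.sum_mul]
    rw [Finset.sum_comm]
    have e2 : ∀ a ∈ A, ∑ a' ∈ Finset.Icc 1 (p - 1), x a * ((if a' = a then (p : ℝ) / 2 else 0) -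
        (if a' = p - a then (p : ℝ) / 2 else 0)) * γ a' =
        (p : ℝ) / 2 * (x a * (γ a - γ (p - a))) := by
      intro a ha
      obtain ⟨h1, h2, -⟩ := hAmem a ha
      have m1 : a ∈ Finset.Icc 1 (p - 1) := Finset.mem_Icc.2 ⟨by omega, by omega⟩
      have m2 : p - a ∈ Finset.Icc 1 (p - 1) := Finset.mem_Icc.2 ⟨by omega, by omega⟩
      simp only [mul_sub, sub_mul, Finset.sum_sub_distrib, mul_ite, ite_mul, mul_zero, zero_mul]
      rw [Finset.sum_ite_eq' , Finset.sum_ite_eq', if_pos m1, if_pos m2]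
      ring
    rw [Finset.sum_congr rfl e2, ← Finset.mul_sum, hx1, mul_zero]
  have hL : ∑ b ∈ Finset.Icc 1 (p - 1), y b * Real.log (Real.Gamma ((b : ℝ) / p)) = 0 := by
    rw [Finset.sum_congr rfl fun b hb => by rw [hC b hb]] at hpair
    have e3 : ∑ b ∈ Finset.Icc 1 (p - 1), y b * (Real.pi / 2 *
        (Real.log (Real.Gamma ((b : ℝ) / p)) - Real.log (Real.Gamma (((p - b : ℕ) : ℝ) / p)))
        + C * ((b : ℝ) / p - 1 / 2)) =
        Real.pi / 2 * (∑ b ∈ Finset.Icc 1 (p - 1), y b * Real.log (Real.Gamma ((b : ℝ) / p))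
        - ∑ b ∈ Finset.Icc 1 (p - 1), y b * Real.log (Real.Gamma (((p - b : ℕ) : ℝ) / p)))
        + C / p * (∑ b ∈ Finset.Icc 1 (p - 1), y b * b)
        - C / 2 * (∑ b ∈ Finset.Icc 1 (p - 1), y b) := by
      simp only [Finset.mul_sum, ← Finset.sum_sub_distrib, ← Finset.sum_add_distrib]
      exact Finset.sum_congr rfl fun b _ => by ring
    rw [e3, hyb, hy1, hyodd (fun b => Real.log (Real.Gamma ((b : ℝ) / p)))] at hpair
    have hpi := Real.pi_pos
    have : Real.pi * ∑ b ∈ Finset.Icc 1 (p - 1), y b * Real.log (Real.Gamma ((b : ℝ) / p)) = 0 := by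
      linarith
    exact (mul_eq_zero.1 this).resolve_left hpi.ne'
  have hyz : ∀ b ∈ Finset.Icc 1 (p - 1), y b = 0 := by
    intro b hb
    have := hconj (fun b => (y b : ℂ)) (fun b => (hyalg b).algebraMap) (by
      exact_mod_cast hL) b hb
    exact_mod_cast this
  obtain ⟨h1, h2, -⟩ := hAmem j hjA
  have hfin := hyorth j (Finset.mem_Icc.2 ⟨h1, by omega⟩)
  rw [Finset.sum_eq_zero fun b hb => by rw [hyz b hb, zero_mul], Finset.sum_eq_single j] at hfin
  · rw [if_pos rfl, if_neg (by omega), sub_zero] at hfin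
    have hp' : (p : ℝ) / 2 ≠ 0 := by positivity
    exact hj0 ((mul_eq_zero.1 hfin.symm).resolve_right hp')
  · intro a ha hne
    have := hAmem a ha
    rw [if_neg (fun h => hne h.symm), if_neg (by omega)]; simp
  · exact fun h => absurd hjA h
end
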